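/- arXiv:1911.11016 — 2 statements merged into one kernel-verified Lean document; each statement's English description precedes it below -/
import Mathlib

section
/- For every t > 0, the supremum over all integers n ≥ 1 of |tC_n^eucl|_Rips equals e^{−2t} + 2πt·Σ_{r odd} (1/r)·e^{−2t·cos(π/(2r))}·sin(π/(2r)), where the sum is over all odd positive integers r. -/
open scoped BigOperators Real

/-- The Rips magnitude function of a finite subset `A` of a metric space:
`|tA|_Rips = Σ_{∅ ≠ B ⊆ A} (−1)^{#B−1} e^{−diam(B)·t}`. -/
noncomputable def ripsMag {Y : Type*} [MetricSpace Y] (A : Finset Y) (t : ℝ) : ℝ :=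
  ∑ B ∈ A.powerset.filter (fun B => B.Nonempty),
    (-1 : ℝ) ^ (B.card - 1) * Real.exp (-(Metric.diam (B : Set Y)) * t)


/-- The Euclidean cycle `C_n^eucl`: `n` equally spaced points on the unit circle
in `ℝ² = ℂ`, with the Euclidean metric. -/
noncomputable def euclCycle (n : ℕ) : Finset ℂ :=
  (Finset.range n).image
    (fun k : ℕ => Complex.exp (2 * (π : ℂ) * (k : ℂ) / (n : ℂ) * Complex.I))

/-- The `r`-th term `(1/r) e^{−2t cos(π/(2r))} sin(π/(2r))` of the limsup series. -/
noncomputable def euclSeriesTerm (t : ℝ) (r : ℕ) : ℝ :=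
  (1 / (r : ℝ)) * Real.exp (-2 * t * Real.cos (π / (2 * (r : ℝ)))) *
    Real.sin (π / (2 * (r : ℝ)))

/-!
Sorting the simplices by diameter writes the Rips magnitude as a sum over the possible distances of
Euler characteristics of Vietoris–Rips complexes times increments of `exp (-δ * t)`. On the
`n`-cycle, the complex at the scale of chords spanning `k < n / 2` steps consists of the cliques of
the `k`-th power of the cycle. A sign-reversing involution cancels all of them unless `n - 2 * k`
divides `k`, in which case only the classes modulo `n - 2 * k` survive, each with the odd number
`n / (n - 2 * k)` of elements. So the Euler characteristic is `n - 2 * k` if `n - 2 * k ∣ k` and `0`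
otherwise, and the scales that contribute correspond to the odd divisors `r = n / (n - 2 * k)`
of `n`.

The contribution of `r` is `π / r` times a difference quotient, with step `π / n`, of the convex
function `θ ↦ exp (-2 * t * cos θ)` at `π / (2 * r)`. By convexity it is at most `π / r` times the
derivative, which is the `r`-th term of the limit, and it tends to that term as `n` runs through the
multiples of `R!`, all of which have every odd `r ≤ R` as a divisor.
-/

section VietorisRips

open Finset

theorem exists_dist_eq_diam_finset {Y : Type*} [PseudoMetricSpace Y] {B : Finset Y}
    (hB : B.Nonempty) : ∃ x ∈ B, ∃ y ∈ B, Metric.diam (B : Set Y) = dist x y := by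
  obtain ⟨⟨x, y⟩, hxy, hmax⟩ := exists_max_image (B ×ˢ B) (fun p => dist p.1 p.2) (hB.product hB)
  obtain ⟨hx, hy⟩ := mem_product.1 hxy
  refine ⟨x, hx, y, hy, le_antisymm ?_ ?_⟩
  · exact Metric.diam_le_of_forall_dist_le dist_nonneg fun a ha b hb =>
      hmax (a, b) (mem_product.2 ⟨ha, hb⟩)
  · exact Metric.dist_le_diam_of_mem B.finite_toSet.isBounded hx hy

theorem eq_add_sum_range_ite_sub_succ {M : Type*} [AddCommGroup M] (g : ℕ → M) {K N : ℕ}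
    (h : K ≤ N) : g K = g N + ∑ k ∈ range N, if K ≤ k then g k - g (k + 1) else 0 := by
  induction N, h using Nat.le_induction with
  | base => rw [sum_eq_zero fun k hk => if_neg (by simpa using hk), add_zero]
  | succ N hN ih =>
    rw [sum_range_succ, if_pos hN, ih]
    abel

/-- The Euler characteristic of the Vietoris–Rips complex of `A` at scale `ε`. A simplex is
encoded by its vertex set `B` and has dimension `#B - 1`, whence the sign `(-1) ^ (#B + 1)`. -/
noncomputable def ripsEulerChar {Y : Type*} [PseudoMetricSpace Y] (A : Finset Y) (ε : ℝ) : ℤ :=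
  ∑ B ∈ A.powerset.filter (fun B : Finset Y => B.Nonempty ∧ Metric.diam (B : Set Y) ≤ ε),
    (-1) ^ (#B + 1)

theorem ripsEulerChar_of_diam_le {Y : Type*} [PseudoMetricSpace Y] {A : Finset Y} {ε : ℝ}
    (hA : A.Nonempty) (hε : Metric.diam (A : Set Y) ≤ ε) : ripsEulerChar A ε = 1 := by
  classical
  have hfilter : A.powerset.filter (fun B : Finset Y => B.Nonempty ∧ Metric.diam (B : Set Y) ≤ ε) =
      A.powerset.erase ∅ := by
    ext B
    simp only [mem_filter, mem_powerset, mem_erase, nonempty_iff_ne_empty]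
    exact ⟨fun h => ⟨h.2.1, h.1⟩, fun h => ⟨h.2, h.1,
      (Metric.diam_mono (coe_subset.2 h.2) A.finite_toSet.isBounded).trans hε⟩⟩
  simp only [ripsEulerChar, hfilter, pow_succ, ← sum_mul,
    sum_erase_eq_sub (empty_mem_powerset A), sum_powerset_neg_one_pow_card_of_nonempty hA]
  simp

theorem ripsEulerChar_image_univ {α Y : Type*} [Fintype α] [PseudoMetricSpace Y] [DecidableEq Y]
    {f : α → Y} (hf : Function.Injective f) (ε : ℝ) :
    ripsEulerChar (univ.image f) ε =
      ∑ B ∈ univ.filter (fun B : Finset α => B.Nonempty ∧ Metric.diam (f '' (B : Set α)) ≤ ε),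
        (-1) ^ (#B + 1) := by
  classical
  rw [ripsEulerChar, powerset_image, powerset_univ, filter_image,
    sum_image (image_injective hf).injOn]
  simp only [image_nonempty, coe_image, card_image_of_injective _ hf]

theorem ripsMag_eq_sum_ripsEulerChar {Y : Type*} [MetricSpace Y] {A : Finset Y} {δ : ℕ → ℝ}
    {N : ℕ} (hδ : StrictMonoOn δ (Set.Iic N))
    (hdiam : ∀ B ⊆ A, B.Nonempty → ∃ K ≤ N, Metric.diam (B : Set Y) = δ K) (t : ℝ) :
    ripsMag A t = ripsEulerChar A (δ N) * Real.exp (-δ N * t) +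
      ∑ k ∈ range N, ripsEulerChar A (δ k) *
        (Real.exp (-δ k * t) - Real.exp (-δ (k + 1) * t)) := by
  have hterm : ∀ B ∈ A.powerset.filter (fun B : Finset Y => B.Nonempty),
      (-1 : ℝ) ^ (#B - 1) * Real.exp (-Metric.diam (B : Set Y) * t) =
        (if Metric.diam (B : Set Y) ≤ δ N then (-1) ^ (#B + 1) else 0) * Real.exp (-δ N * t) +
        ∑ k ∈ range N, (if Metric.diam (B : Set Y) ≤ δ k then (-1) ^ (#B + 1) else 0) *
          (Real.exp (-δ k * t) - Real.exp (-δ (k + 1) * t)) := by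
    intro B hB
    obtain ⟨hBA, hne⟩ := mem_filter.1 hB
    obtain ⟨K, hK, hBK⟩ := hdiam B (mem_powerset.1 hBA) hne
    have hle : ∀ k ≤ N, (Metric.diam (B : Set Y) ≤ δ k ↔ K ≤ k) := fun k hk =>
      hBK ▸ hδ.le_iff_le hK hk
    have hsign : (-1 : ℝ) ^ (#B - 1) = (-1) ^ (#B + 1) := by
      obtain ⟨c, hc⟩ := Nat.exists_eq_add_of_le' hne.card_pos
      rw [hc, Nat.add_sub_cancel, pow_succ, pow_succ]
      ring
    rw [sum_congr rfl fun k hk => by rw [if_congr (hle k (mem_range.1 hk).le) rfl rfl],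
      if_pos ((hle N le_rfl).2 hK), hsign, hBK,
      eq_add_sum_range_ite_sub_succ (fun k => Real.exp (-δ k * t)) hK, mul_add, mul_sum]
    simp only [mul_ite, ite_mul, mul_zero, zero_mul]
  have hcast : ∀ ε, (ripsEulerChar A ε : ℝ) =
      ∑ B ∈ A.powerset.filter (fun B : Finset Y => B.Nonempty),
        if Metric.diam (B : Set Y) ≤ ε then (-1) ^ (#B + 1) else 0 := fun ε => by
    rw [ripsEulerChar, ← filter_filter, sum_filter]
    push_cast
    rfl
  rw [ripsMag, sum_congr rfl hterm, sum_add_distrib, ← sum_mul, sum_comm]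
  simp only [hcast, sum_mul]

end VietorisRips

section SignReversal

open Finset
open scoped symmDiff

variable {α : Type*} [DecidableEq α]

theorem symmDiff_singleton_of_mem {v : α} {B : Finset α} (h : v ∈ B) :
    B ∆ {v} = B.erase v := by
  grind [mem_symmDiff]

theorem symmDiff_singleton_of_notMem {v : α} {B : Finset α} (h : v ∉ B) :
    B ∆ {v} = insert v B := by
  grind [mem_symmDiff]

theorem neg_one_pow_card_symmDiff_singleton {R : Type*} [Ring R] (v : α) (B : Finset α) :
    (-1 : R) ^ #(B ∆ {v}) = -(-1) ^ #B := by
  by_cases h : v ∈ B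
  · rw [symmDiff_singleton_of_mem h, ← card_erase_add_one h, pow_succ, mul_neg_one, neg_neg]
  · rw [symmDiff_singleton_of_notMem h, card_insert_of_notMem h, pow_succ, mul_neg_one]

theorem sum_neg_one_pow_card_eq_zero_of_toggle {R : Type*} [Ring R] {𝓕 : Finset (Finset α)}
    (v : Finset α → α) (hmem : ∀ B ∈ 𝓕, B ∆ {v B} ∈ 𝓕) (hv : ∀ B ∈ 𝓕, v (B ∆ {v B}) = v B) :
    ∑ B ∈ 𝓕, (-1 : R) ^ #B = 0 := by
  refine sum_involution (fun B _ => B ∆ {v B}) (fun B _ => ?_) (fun B _ _ => ?_) hmem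
    fun B hB => ?_
  · rw [neg_one_pow_card_symmDiff_singleton, add_neg_cancel]
  · simp [symmDiff_eq_left]
  · rw [hv B hB, symmDiff_symmDiff_cancel_right]

end SignReversal

section CyclicCliques

open Finset
open scoped symmDiff

variable {n : ℕ} [NeZero n]

theorem val_sub_eq_ite (v x y : ZMod n) : (y - x).val =
    if (x - v).val ≤ (y - v).val then (y - v).val - (x - v).val
    else n + (y - v).val - (x - v).val := by
  have hx := (x - v).val_lt
  rw [← sub_sub_sub_cancel_right y x v]
  generalize x - v = a at *
  generalize y - v = b
  split_ifs with h
  · exact ZMod.val_sub h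
  · have ha : a ≠ 0 := by rintro rfl; simp at h
    rw [sub_eq_add_neg, ZMod.val_add_of_lt] <;> rw [ZMod.neg_val, if_neg ha] <;> omega

theorem natAbs_valMinAbs_le_iff {a : ZMod n} {k : ℕ} :
    a.valMinAbs.natAbs ≤ k ↔ a.val ≤ k ∨ (-a).val ≤ k := by
  rw [ZMod.valMinAbs_natAbs_eq_min, min_le_iff, ZMod.neg_val]
  split_ifs with h <;> simp [h]

/-- `B` is a clique of the `k`-th power of the cycle of length `n`: its points are pairwise at
circular distance at most `k`. -/
def IsCyclicClique (k : ℕ) (B : Finset (ZMod n)) : Prop :=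
  ∀ x ∈ B, ∀ y ∈ B, (y - x).valMinAbs.natAbs ≤ k

/-- `c` is the point of `B` furthest ahead of `z` within `k` steps; the number of steps from `z`
forward to `y` is `(y - z).val`. -/
def IsFurthest (k : ℕ) (B : Finset (ZMod n)) (z c : ZMod n) : Prop :=
  c ∈ B ∧ (c - z).val ≤ k ∧ ∀ y ∈ B, (y - z).val ≤ k → (y - z).val ≤ (c - z).val

open Classical in
/-- The image of the map sending each point of `B` to the point of `B` furthest ahead of it
within `k` steps. -/
noncomputable def furthestPoints (k : ℕ) (B : Finset (ZMod n)) : Finset (ZMod n) :=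
  {c | ∃ z ∈ B, IsFurthest k B z c}

variable {k : ℕ} {B : Finset (ZMod n)} {v c z : ZMod n}

theorem mem_furthestPoints : c ∈ furthestPoints k B ↔ ∃ z ∈ B, IsFurthest k B z c := by
  simp [furthestPoints]

theorem isCyclicClique_iff : IsCyclicClique k B ↔
    ∀ x ∈ B, ∀ y ∈ B, (y - x).val ≤ k ∨ (x - y).val ≤ k := by
  simp only [IsCyclicClique, natAbs_valMinAbs_le_iff, neg_sub]

theorem furthestPoints_subset : furthestPoints k B ⊆ B := fun _ hc =>
  have ⟨_, _, hzc⟩ := mem_furthestPoints.1 hc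
  hzc.1

theorem furthestPoints_nonempty (hB : B.Nonempty) : (furthestPoints k B).Nonempty := by
  obtain ⟨z, hz⟩ := hB
  obtain ⟨c, hc, hmax⟩ := exists_max_image {y ∈ B | (y - z).val ≤ k} (fun y => (y - z).val)
    ⟨z, by simp [hz]⟩
  obtain ⟨hcB, hck⟩ := mem_filter.1 hc
  exact ⟨c, mem_furthestPoints.2 ⟨z, hz, hcB, hck, fun y hy hyk => hmax y (mem_filter.2 ⟨hy, hyk⟩)⟩⟩

-- Points of `B` violating both inequalities would be beyond `v + k` within reach of `z`, or more
-- than `k` steps away from `z` in both directions.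
theorem val_sub_le_or_le (hkn : 2 * k < n) (hB : IsCyclicClique k B) (hz : z ∈ B)
    (hzc : IsFurthest k B z (v + k)) {y : ZMod n} (hy : y ∈ B) :
    (y - v).val ≤ k ∨ n + (z - v).val ≤ k + (y - v).val := by
  have hclique := isCyclicClique_iff.1 hB z hz y hy
  have hfar := hzc.2.2 y hy
  have hle := hzc.2.1
  have hk : (v + (k : ZMod n) - v).val = k := by
    rw [add_sub_cancel_left, ZMod.val_cast_of_lt (by omega)]
  have := (z - v).val_lt
  have := (y - v).val_lt
  rw [val_sub_eq_ite v, val_sub_eq_ite v z, hk] at hfar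
  rw [val_sub_eq_ite v, hk] at hle
  rw [val_sub_eq_ite v, val_sub_eq_ite v y] at hclique
  grind

theorem IsCyclicClique.insert (hkn : 2 * k < n) (hB : IsCyclicClique k B)
    (hc : v + k ∈ furthestPoints k B) : IsCyclicClique k (insert v B) := by
  obtain ⟨z, hz, hzc⟩ := mem_furthestPoints.1 hc
  have hv : ∀ y ∈ B, (y - v).val ≤ k ∨ (v - y).val ≤ k := fun y hy => by
    have := val_sub_le_or_le hkn hB hz hzc hy
    have := (y - v).val_lt
    grind [val_sub_eq_ite v y v, sub_self, ZMod.val_zero]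
  have := isCyclicClique_iff.1 hB
  rw [isCyclicClique_iff]
  grind [sub_self, ZMod.val_zero]

theorem IsFurthest.eq {d : ZMod n} (hc : IsFurthest k B z c) (hd : IsFurthest k B z d) : c = d :=
  sub_left_injective <| ZMod.val_injective n <|
    le_antisymm (hd.2.2 c hc.1 hc.2.1) (hc.2.2 d hd.1 hd.2.1)

theorem isFurthest_insert_iff (hkn : 2 * k < n) (hB : IsCyclicClique k B)
    (hc : v + k ∈ furthestPoints k B) {w d : ZMod n} (hw : w ∈ B) :
    IsFurthest k (insert v B) w d ↔ IsFurthest k B w d := by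
  by_cases hv : v ∈ B
  · rw [insert_eq_self.2 hv]
  obtain ⟨z, hz, hzc⟩ := mem_furthestPoints.1 hc
  have hcv : (v + (k : ZMod n) - v).val = k := by
    rw [add_sub_cancel_left, ZMod.val_cast_of_lt (by omega)]
  have hvz : 0 < (z - v).val := ZMod.val_pos.2 (sub_ne_zero.2 fun h => hv (h ▸ hz))
  have hcloser : (v - w).val ≤ k → (v - w).val < (z - w).val ∧ (z - w).val ≤ k := by
    have := val_sub_le_or_le hkn hB hz hzc hw
    have := val_sub_le_or_le hkn hB hz hzc hz
    have := (w - v).val_lt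
    have := (z - v).val_lt
    rw [val_sub_eq_ite v w v, val_sub_eq_ite v w z, sub_self, ZMod.val_zero]
    grind
  grind [IsFurthest]

theorem furthestPoints_insert (hkn : 2 * k < n) (hB : IsCyclicClique k B)
    (hc : v + k ∈ furthestPoints k B) :
    furthestPoints k (insert v B) = furthestPoints k B := by
  have hvk : IsFurthest k (insert v B) v (v + k) := by
    refine ⟨mem_insert_of_mem (furthestPoints_subset hc), ?_, fun y _ hy => hy.trans ?_⟩ <;>
    rw [add_sub_cancel_left, ZMod.val_cast_of_lt (by omega)]
  ext d
  rw [mem_furthestPoints, exists_mem_insert, mem_furthestPoints]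
  have hiff : (∃ w ∈ B, IsFurthest k (insert v B) w d) ↔ ∃ w ∈ B, IsFurthest k B w d :=
    exists_congr fun w => and_congr_right (isFurthest_insert_iff hkn hB hc)
  rw [hiff, or_iff_right_iff_imp]
  exact fun hd => hvk.eq hd ▸ mem_furthestPoints.1 hc

omit [NeZero n] in
theorem IsCyclicClique.mono {A : Finset (ZMod n)} (hB : IsCyclicClique k B) (hA : A ⊆ B) :
    IsCyclicClique k A := fun x hx y hy => hB x (hA hx) y (hA hy)

theorem add_mem_furthestPoints_erase (hkn : 2 * k < n) (hB : IsCyclicClique k B)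
    (hc : v + k ∈ furthestPoints k B) (hv : v ∉ furthestPoints k B) :
    v + k ∈ furthestPoints k (B.erase v) := by
  by_cases hvB : v ∉ B
  · rwa [erase_eq_of_notMem hvB]
  rw [not_not] at hvB
  obtain ⟨z, hz, hzc⟩ := mem_furthestPoints.1 hc
  have hcv : (v + (k : ZMod n) - v).val = k := by
    rw [add_sub_cancel_left, ZMod.val_cast_of_lt (by omega)]
  have hcB : v + (k : ZMod n) ∈ B.erase v :=
    mem_erase.2 ⟨fun h => hv (by rwa [h] at hc), hzc.1⟩
  obtain ⟨w, hw, hmin⟩ := exists_min_image (B.erase v) (fun y => (y - v).val) ⟨_, hcB⟩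
  have hwk : (w - v).val ≤ k := hcv ▸ hmin _ hcB
  have hwpos : 0 < (w - v).val := ZMod.val_pos.2 (sub_ne_zero.2 (mem_erase.1 hw).1)
  -- A point `y ∈ B` beyond `v + k` but within `k` steps of `w`, the successor of `v` in `B`, would
  -- have `v` as its furthest point.
  refine mem_furthestPoints.2 ⟨w, hw, hcB, by grind [val_sub_eq_ite v w], fun y hy hyk => ?_⟩
  by_contra hlt
  have hyB := mem_of_mem_erase hy
  have hwy := hmin y hy
  have hyv := val_sub_le_or_le hkn hB hz hzc hyB
  have := (y - v).val_lt
  rw [val_sub_eq_ite v, if_pos hwy] at hyk hlt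
  rw [val_sub_eq_ite v w (v + k), hcv, if_pos hwk] at hlt
  have hvy : (v - y).val = n - (y - v).val := by
    grind [val_sub_eq_ite v y v, sub_self, ZMod.val_zero]
  refine hv (mem_furthestPoints.2 ⟨y, hyB, hvB, by omega, fun x hx hxk => ?_⟩)
  rcases eq_or_ne x v with rfl | hxv
  · exact le_rfl
  have hwx := hmin x (mem_erase.2 ⟨hxv, hx⟩)
  have := (x - v).val_lt
  rw [val_sub_eq_ite v] at hxk ⊢
  grind

/-- The points `v` that are not in `furthestPoints k B` although `v + k` is. Adding a slot `v` to a
clique `B`, or removing it, yields a clique with the same furthest points, so toggling slots cancels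
cliques in pairs of opposite sign. -/
noncomputable def slots (k : ℕ) (B : Finset (ZMod n)) : Finset (ZMod n) :=
  {v | v ∉ furthestPoints k B ∧ v + k ∈ furthestPoints k B}

theorem mem_slots :
    v ∈ slots k B ↔ v ∉ furthestPoints k B ∧ v + k ∈ furthestPoints k B := by
  simp [slots]

theorem IsCyclicClique.symmDiff_singleton (hkn : 2 * k < n) (hB : IsCyclicClique k B)
    (hv : v ∈ slots k B) : IsCyclicClique k (B ∆ {v}) := by
  by_cases hvB : v ∈ B
  · exact symmDiff_singleton_of_mem hvB ▸ hB.mono (erase_subset v B)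
  · exact symmDiff_singleton_of_notMem hvB ▸ hB.insert hkn (mem_slots.1 hv).2

theorem furthestPoints_symmDiff_singleton (hkn : 2 * k < n) (hB : IsCyclicClique k B)
    (hv : v ∈ slots k B) : furthestPoints k (B ∆ {v}) = furthestPoints k B := by
  obtain ⟨hvF, hc⟩ := mem_slots.1 hv
  by_cases hvB : v ∈ B
  · have herase := add_mem_furthestPoints_erase hkn hB hc hvF
    rw [symmDiff_singleton_of_mem hvB, ← furthestPoints_insert hkn (hB.mono (erase_subset v B))
      herase, insert_erase hvB]
  · rw [symmDiff_singleton_of_notMem hvB, furthestPoints_insert hkn hB hc]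

theorem slots_symmDiff_singleton (hkn : 2 * k < n) (hB : IsCyclicClique k B)
    (hv : v ∈ slots k B) : slots k (B ∆ {v}) = slots k B := by
  simp only [slots, furthestPoints_symmDiff_singleton hkn hB hv]

theorem symmDiff_singleton_nonempty (hkn : 2 * k < n) (hB : IsCyclicClique k B)
    (hv : v ∈ slots k B) : (B ∆ {v}).Nonempty := by
  have hc : v + k ∈ furthestPoints k (B ∆ {v}) := by
    rw [furthestPoints_symmDiff_singleton hkn hB hv]
    exact (mem_slots.1 hv).2
  exact ⟨_, furthestPoints_subset hc⟩

open scoped Classical in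
theorem sum_neg_one_pow_card_of_slots_nonempty (hkn : 2 * k < n) :
    ∑ B : Finset (ZMod n) with IsCyclicClique k B ∧ B.Nonempty ∧ (slots k B).Nonempty,
      (-1 : ℤ) ^ #B = 0 := by
  -- The toggled slot depends only on `slots k B`, which toggling preserves, so toggling twice is
  -- the identity.
  choose! pick hpick using fun (S : Finset (ZMod n)) (hS : S.Nonempty) => hS.exists_mem
  refine sum_neg_one_pow_card_eq_zero_of_toggle (fun B => pick (slots k B)) ?_ ?_ <;>
  simp only [mem_filter, mem_univ, true_and, and_imp]
  · intro B hB _ hs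
    have hv := hpick _ hs
    exact ⟨hB.symmDiff_singleton hkn hv, symmDiff_singleton_nonempty hkn hB hv,
      by rwa [slots_symmDiff_singleton hkn hB hv]⟩
  · intro B hB _ hs
    rw [slots_symmDiff_singleton hkn hB (hpick _ hs)]

theorem add_nsmul_mem_furthestPoints_of_slots_eq_empty (hkn : 2 * k < n) (hs : slots k B = ∅)
    (hc : c ∈ furthestPoints k B) (j : ℕ) :
    c + j • ((n - 2 * k : ℕ) : ZMod n) ∈ furthestPoints k B := by
  have hstep : ∀ v, v + (k : ZMod n) ∈ furthestPoints k B → v ∈ furthestPoints k B := fun v hv => by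
    by_contra h
    exact notMem_empty v (hs ▸ mem_slots.2 ⟨h, hv⟩)
  induction j with
  | zero => simpa using hc
  | succ j ih =>
    refine hstep _ (hstep _ ?_)
    rw [Nat.cast_sub hkn.le, ZMod.natCast_self] at *
    convert ih using 1
    push_cast
    rw [succ_nsmul]
    ring

theorem eq_of_val_sub_lt (hB : IsCyclicClique k B) {x : ZMod n}
    (hc : c ∈ furthestPoints k B) (hx : x ∈ B) (hlt : (x - c).val < n - 2 * k) : x = c := by
  obtain ⟨z, hz, hzc⟩ := mem_furthestPoints.1 hc
  have hfar := hzc.2.2 x hx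
  have hle := hzc.2.1
  have hclique := isCyclicClique_iff.1 hB z hz x hx
  have := (x - z).val_lt
  refine sub_eq_zero.1 ((ZMod.val_eq_zero _).1 ?_)
  rw [val_sub_eq_ite z] at hlt ⊢
  rw [val_sub_eq_ite z x z, sub_self, ZMod.val_zero] at hclique
  grind

theorem mem_iff_dvd_val_sub_of_slots_eq_empty (hkn : 2 * k < n) (hB : IsCyclicClique k B)
    (hs : slots k B = ∅) (hc : c ∈ furthestPoints k B) {x : ZMod n} :
    x ∈ B ↔ n - 2 * k ∣ (x - c).val := by
  have hmem := add_nsmul_mem_furthestPoints_of_slots_eq_empty hkn hs hc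
  have hx : x = c + ((x - c).val : ZMod n) := by rw [ZMod.natCast_zmod_val, add_sub_cancel]
  constructor
  · intro hxB
    set m := n - 2 * k
    set q := (x - c).val
    have hmod : (x - (c + (q / m) • (m : ZMod n))).val = q % m := by
      have hq : (q : ZMod n) = (q % m : ℕ) + (q / m) • (m : ZMod n) := by
        rw [nsmul_eq_mul, ← Nat.cast_mul, ← Nat.cast_add, Nat.mod_add_div']
      rw [hx, hq, add_sub_add_left_eq_sub, add_sub_cancel_right,
        ZMod.val_cast_of_lt ((Nat.mod_lt _ (by omega)).trans_le (Nat.sub_le _ _))]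
    have hlt : q % m < m := Nat.mod_lt _ (by omega)
    rw [Nat.dvd_iff_mod_eq_zero, ← hmod, eq_of_val_sub_lt hB (hmem _) hxB (hmod ▸ hlt),
      sub_self, ZMod.val_zero]
  · rintro ⟨j, hj⟩
    rw [hx, hj, Nat.cast_mul, mul_comm, ← nsmul_eq_mul]
    exact furthestPoints_subset (hmem j)

theorem dvd_of_slots_eq_empty (hkn : 2 * k < n) (hB : IsCyclicClique k B) (hne : B.Nonempty)
    (hs : slots k B = ∅) : n - 2 * k ∣ k := by
  obtain ⟨c, hc⟩ := furthestPoints_nonempty (k := k) hne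
  have hck : c - k ∈ furthestPoints k B := by
    by_contra h
    exact notMem_empty _ (hs ▸ mem_slots.2 ⟨h, by rwa [sub_add_cancel]⟩)
  have hdvd := (mem_iff_dvd_val_sub_of_slots_eq_empty hkn hB hs hck).1 (furthestPoints_subset hc)
  rwa [sub_sub_cancel, ZMod.val_cast_of_lt (by omega)] at hdvd

/-- A fibre of the reduction `ZMod n → ZMod m`. For `m = n - 2 * k` dividing `k`, these fibres are
the nonempty cliques without slots. -/
def residueClass {m : ℕ} (hmn : m ∣ n) (i : ZMod m) : Finset (ZMod n) :=
  {x | ZMod.castHom hmn (ZMod m) x = i}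

theorem mem_residueClass {m : ℕ} (hmn : m ∣ n) {i : ZMod m} {x : ZMod n} :
    x ∈ residueClass hmn i ↔ ZMod.castHom hmn (ZMod m) x = i := by
  rw [residueClass, mem_filter_univ]

theorem castHom_eq_castHom_iff {m : ℕ} (hmn : m ∣ n) {x y : ZMod n} :
    ZMod.castHom hmn (ZMod m) x = ZMod.castHom hmn (ZMod m) y ↔ m ∣ (x - y).val := by
  rw [← sub_eq_zero, ← map_sub, ZMod.castHom_apply, ZMod.cast_eq_val, ZMod.natCast_eq_zero_iff]

theorem residueClass_nonempty {m : ℕ} (hmn : m ∣ n) (i : ZMod m) :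
    (residueClass hmn i).Nonempty :=
  (ZMod.castHom_surjective hmn i).imp fun _ => (mem_residueClass hmn).2

theorem residueClass_injective {m : ℕ} (hmn : m ∣ n) :
    Function.Injective (residueClass (n := n) hmn) := fun i j hij => by
  obtain ⟨x, hx⟩ := residueClass_nonempty hmn i
  rw [← (mem_residueClass hmn).1 hx, (mem_residueClass hmn).1 (hij ▸ hx)]

theorem card_residueClass {m : ℕ} (hmn : m ∣ n) (i : ZMod m) :
    #(residueClass hmn i) = n / m := by
  have : NeZero m := ⟨fun h => NeZero.ne n (zero_dvd_iff.1 (h ▸ hmn))⟩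
  have hcard : ∀ j, #(residueClass hmn j) = #(residueClass hmn i) := fun j =>
    AddMonoidHom.card_fiber_eq_of_mem_range (ZMod.castHom hmn (ZMod m))
      (ZMod.castHom_surjective hmn j) (ZMod.castHom_surjective hmn i)
  have hsum : #(univ : Finset (ZMod n)) = ∑ j, #(residueClass hmn j) :=
    card_eq_sum_card_fiberwise fun _ _ => mem_coe.2 (mem_univ _)
  rw [sum_congr rfl fun j _ => hcard j, sum_const, card_univ, card_univ, ZMod.card, ZMod.card,
    smul_eq_mul] at hsum
  exact (Nat.div_eq_of_eq_mul_right (NeZero.pos m) hsum).symm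

theorem exists_eq_residueClass (hmn : n - 2 * k ∣ n) (hB : IsCyclicClique k B)
    (hne : B.Nonempty) (hs : slots k B = ∅) : ∃ i, residueClass hmn i = B := by
  have hkn : 2 * k < n := Nat.lt_of_sub_pos (Nat.pos_of_dvd_of_pos hmn (NeZero.pos n))
  obtain ⟨c, hc⟩ := furthestPoints_nonempty (k := k) hne
  refine ⟨ZMod.castHom hmn _ c, ext fun x => ?_⟩
  rw [mem_residueClass, castHom_eq_castHom_iff, mem_iff_dvd_val_sub_of_slots_eq_empty hkn hB hs hc]

theorem isCyclicClique_residueClass (hmn : n - 2 * k ∣ n) (hmk : n - 2 * k ∣ k)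
    (i : ZMod (n - 2 * k)) : IsCyclicClique k (residueClass hmn i) := by
  rw [isCyclicClique_iff]
  intro x hx y hy
  rw [mem_residueClass] at hx hy
  have hdvd := (castHom_eq_castHom_iff hmn).1 (hy.trans hx.symm)
  rw [← neg_sub y x, ZMod.neg_val]
  by_contra! h
  have hle := Nat.le_of_dvd (by omega) (Nat.dvd_sub hdvd hmk)
  split_ifs at h <;> omega

theorem slots_residueClass (hmn : n - 2 * k ∣ n) (hmk : n - 2 * k ∣ k)
    (i : ZMod (n - 2 * k)) : slots k (residueClass hmn i) = ∅ := by
  have hm := Nat.pos_of_dvd_of_pos hmn (NeZero.pos n)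
  refine eq_empty_of_forall_notMem fun v hv => (mem_slots.1 hv).1 ?_
  have hk : ZMod.castHom hmn (ZMod (n - 2 * k)) k = 0 := by
    rwa [map_natCast, ZMod.natCast_eq_zero_iff]
  have hvi := furthestPoints_subset (mem_slots.1 hv).2
  rw [mem_residueClass, map_add, hk, add_zero] at hvi
  have hval : (v - (v - (k : ZMod n))).val = k := by
    rw [sub_sub_cancel, ZMod.val_cast_of_lt (by omega)]
  refine mem_furthestPoints.2 ⟨v - k, ?_, (mem_residueClass hmn).2 hvi, hval.le,
    fun y _ hy => hval.symm ▸ hy⟩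
  rw [mem_residueClass, map_sub, hk, sub_zero, hvi]

theorem exists_odd_eq_sub_two_mul_mul {n k : ℕ} (hmk : n - 2 * k ∣ k) :
    ∃ r, Odd r ∧ n = (n - 2 * k) * r := by
  have hle : 2 * k ≤ n := by
    by_contra! h
    rw [Nat.sub_eq_zero_of_le h.le, zero_dvd_iff] at hmk
    omega
  obtain ⟨j, hj⟩ := hmk
  refine ⟨2 * j + 1, odd_two_mul_add_one j, ?_⟩
  rw [mul_add_one, mul_left_comm, ← hj, Nat.add_sub_cancel' hle]

open scoped Classical in
theorem sum_neg_one_pow_card_of_slots_eq_empty (hkn : 2 * k < n) :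
    ∑ B : Finset (ZMod n) with IsCyclicClique k B ∧ B.Nonempty ∧ ¬ (slots k B).Nonempty,
      (-1 : ℤ) ^ #B = if n - 2 * k ∣ k then -((n - 2 * k : ℕ) : ℤ) else 0 := by
  simp only [not_nonempty_iff_eq_empty]
  split_ifs with hmk
  · obtain ⟨r, hr, hnr⟩ := exists_odd_eq_sub_two_mul_mul hmk
    have hmn : n - 2 * k ∣ n := ⟨r, hnr⟩
    have : NeZero (n - 2 * k) := ⟨by omega⟩
    have hclasses : ({B | IsCyclicClique k B ∧ B.Nonempty ∧ slots k B = ∅} :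
        Finset (Finset (ZMod n))) = univ.image (residueClass hmn) := by
      ext B
      simp only [mem_filter_univ, mem_image, mem_univ, true_and]
      refine ⟨fun ⟨hB, hne, hs⟩ => exists_eq_residueClass hmn hB hne hs, ?_⟩
      rintro ⟨i, rfl⟩
      exact ⟨isCyclicClique_residueClass hmn hmk i, residueClass_nonempty hmn i,
        slots_residueClass hmn hmk i⟩
    have hcard : n / (n - 2 * k) = r := Nat.div_eq_of_eq_mul_right (by omega) hnr
    rw [hclasses, sum_image (residueClass_injective hmn).injOn]
    simp [card_residueClass, hcard, hr.neg_one_pow]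
  · rw [filter_false_of_mem fun B _ ⟨hB, hne, hs⟩ => hmk (dvd_of_slots_eq_empty hkn hB hne hs),
      sum_empty]

open scoped Classical in
theorem sum_neg_one_pow_card_isCyclicClique (hkn : 2 * k < n) :
    ∑ B : Finset (ZMod n) with IsCyclicClique k B ∧ B.Nonempty, (-1 : ℤ) ^ #B =
      if n - 2 * k ∣ k then -((n - 2 * k : ℕ) : ℤ) else 0 := by
  rw [← sum_filter_add_sum_filter_not _ fun B => (slots k B).Nonempty]
  simp only [filter_filter, and_assoc]
  rw [sum_neg_one_pow_card_of_slots_nonempty hkn, sum_neg_one_pow_card_of_slots_eq_empty hkn,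
    zero_add]

end CyclicCliques

section EuclideanCycle

open Finset

variable {n : ℕ} [NeZero n]

theorem euclCycle_eq_image_stdAddChar :
    euclCycle n = univ.image (ZMod.stdAddChar (N := n)) := by
  ext z
  simp only [euclCycle, mem_image, mem_range, mem_univ, true_and]
  constructor
  · rintro ⟨k, -, rfl⟩
    refine ⟨(k : ℤ), ?_⟩
    rw [ZMod.stdAddChar_coe]
    push_cast
    ring_nf
  · rintro ⟨x, rfl⟩
    refine ⟨x.val, x.val_lt, ?_⟩
    conv_rhs => rw [← ZMod.natCast_zmod_val x, ← Int.cast_natCast, ZMod.stdAddChar_coe]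
    push_cast
    ring_nf

theorem dist_stdAddChar (x y : ZMod n) :
    dist (ZMod.stdAddChar x) (ZMod.stdAddChar y) =
      2 * Real.sin (π * (x - y).valMinAbs.natAbs / n) := by
  have hn : (0 : ℝ) < n := Nat.cast_pos.2 (NeZero.pos n)
  set j := (x - y).valMinAbs with hj
  have hle : |π * (j : ℝ) / n| ≤ π := by
    have hjn : (j.natAbs : ℝ) ≤ n := mod_cast (ZMod.natAbs_valMinAbs_le _).trans (n.div_le_self 2)
    rw [abs_div, abs_mul, abs_of_pos Real.pi_pos, abs_of_pos hn, ← Int.cast_abs, ← Nat.cast_natAbs,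
      div_le_iff₀ hn]
    gcongr
  have hxy : ZMod.stdAddChar x - ZMod.stdAddChar y =
      ZMod.stdAddChar y * (Complex.exp (Complex.I * ↑(2 * (π * j / n))) - 1) := by
    have hj' : ZMod.stdAddChar (x - y) = Complex.exp (Complex.I * ↑(2 * (π * j / n))) := by
      rw [← ZMod.coe_valMinAbs (x - y), ZMod.stdAddChar_coe, ← hj]
      push_cast
      ring_nf
    rw [← hj', mul_sub, mul_one, ← AddChar.map_add_eq_mul, add_sub_cancel]
  rw [dist_eq_norm, hxy, norm_mul, ZMod.stdAddChar_apply, Circle.norm_coe, one_mul,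
    Complex.norm_exp_I_mul_ofReal_sub_one, mul_div_cancel_left₀ _ two_ne_zero, norm_mul,
    Real.norm_eq_abs, Real.norm_eq_abs, Real.abs_sin_eq_sin_abs_of_abs_le_pi hle]
  simp [abs_div, abs_mul, abs_of_pos Real.pi_pos, Nat.cast_natAbs]

/-- The base angle of the isosceles triangle spanned by the centre of the circle and two vertices
of the regular `n`-gon which are `k` steps apart. It is clamped at `0` once `2 * k ≥ n`, so that for
odd `n` the scale following the last chord is the diameter of the circle. -/
noncomputable def chordAngle (n k : ℕ) : ℝ :=
  max 0 (π / 2 - π * k / n)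

/-- The distance of two vertices of the regular `n`-gon on the unit circle which are `k ≤ n / 2`
steps apart, and the diameter of the circle for larger `k`. -/
noncomputable def chordLength (n k : ℕ) : ℝ :=
  2 * Real.cos (chordAngle n k)

omit [NeZero n] in
theorem chordAngle_mem_Icc (n k : ℕ) : chordAngle n k ∈ Set.Icc 0 (π / 2) := by
  have : 0 ≤ π * k / n := by positivity
  exact ⟨le_max_left _ _, max_le (by positivity) (by linarith)⟩

theorem chordAngle_of_le {k : ℕ} (hk : k ≤ n / 2) :
    chordAngle n k = π / 2 - π * k / n := by
  have hkn : (k : ℝ) * 2 ≤ n := mod_cast (Nat.le_div_iff_mul_le two_pos).1 hk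
  refine max_eq_right (sub_nonneg.2 ?_)
  rw [div_le_div_iff₀ (Nat.cast_pos.2 (NeZero.pos n)) two_pos, mul_assoc]
  gcongr

theorem chordAngle_eq_zero {k : ℕ} (hk : n ≤ 2 * k) : chordAngle n k = 0 := by
  refine max_eq_left (sub_nonpos.2 ?_)
  rw [div_le_div_iff₀ two_pos (Nat.cast_pos.2 (NeZero.pos n)), mul_assoc, mul_comm (k : ℝ)]
  gcongr
  exact_mod_cast hk

theorem dist_stdAddChar_eq_chordLength (x y : ZMod n) :
    dist (ZMod.stdAddChar x) (ZMod.stdAddChar y) = chordLength n (x - y).valMinAbs.natAbs := by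
  rw [dist_stdAddChar, chordLength, chordAngle_of_le (ZMod.natAbs_valMinAbs_le _),
    Real.cos_pi_div_two_sub]

variable (n) in
theorem strictMonoOn_chordLength : StrictMonoOn (chordLength n) (Set.Iic ((n + 1) / 2)) := by
  intro k hk l hl hkl
  rw [Set.mem_Iic] at hk hl
  have hn : (0 : ℝ) < n := Nat.cast_pos.2 (NeZero.pos n)
  have hk' : chordAngle n k = π / 2 - π * k / n := chordAngle_of_le (by omega)
  have hlt : chordAngle n l < chordAngle n k := by
    refine max_lt ?_ ?_
    · rw [hk', sub_pos, div_lt_div_iff₀ hn two_pos, mul_assoc]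
      gcongr
      norm_cast
      omega
    · rw [hk']
      gcongr
  have hmem := chordAngle_mem_Icc n k
  exact mul_lt_mul_of_pos_left (Real.cos_lt_cos_of_nonneg_of_le_pi (chordAngle_mem_Icc n l).1
    (hmem.2.trans (by linarith [Real.pi_pos])) hlt) two_pos

theorem exists_diam_eq_chordLength {B : Finset ℂ} (hB : B ⊆ euclCycle n) (hne : B.Nonempty) :
    ∃ k ≤ n / 2, Metric.diam (B : Set ℂ) = chordLength n k := by
  obtain ⟨z, hz, w, hw, hdiam⟩ := exists_dist_eq_diam_finset hne
  rw [euclCycle_eq_image_stdAddChar] at hB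
  obtain ⟨x, -, rfl⟩ := mem_image.1 (hB hz)
  obtain ⟨y, -, rfl⟩ := mem_image.1 (hB hw)
  exact ⟨_, ZMod.natAbs_valMinAbs_le _, hdiam.trans (dist_stdAddChar_eq_chordLength x y)⟩

theorem diam_image_stdAddChar_le_iff {k : ℕ} (hk : k ≤ (n + 1) / 2) {B : Finset (ZMod n)} :
    Metric.diam (ZMod.stdAddChar '' (B : Set (ZMod n))) ≤ chordLength n k ↔
      IsCyclicClique k B := by
  have hdist : ∀ x y : ZMod n, dist (ZMod.stdAddChar y) (ZMod.stdAddChar x) ≤ chordLength n k ↔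
      (y - x).valMinAbs.natAbs ≤ k := fun x y => by
    have := ZMod.natAbs_valMinAbs_le (y - x)
    rw [dist_stdAddChar_eq_chordLength]
    exact (strictMonoOn_chordLength n).le_iff_le (by rw [Set.mem_Iic]; omega) hk
  constructor
  · intro h x hx y hy
    refine (hdist x y).1 ((Metric.dist_le_diam_of_mem ?_ ?_ ?_).trans h)
    · exact (B.finite_toSet.image _).isBounded
    · exact Set.mem_image_of_mem _ hy
    · exact Set.mem_image_of_mem _ hx
  · intro h
    refine Metric.diam_le_of_forall_dist_le ?_ ?_
    · exact mul_nonneg zero_le_two (Real.cos_nonneg_of_mem_Icc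
        ⟨by linarith [(chordAngle_mem_Icc n k).1, Real.pi_pos], (chordAngle_mem_Icc n k).2⟩)
    · rintro _ ⟨y, hy, rfl⟩ _ ⟨x, hx, rfl⟩
      exact (hdist x y).2 (h x hx y hy)

theorem ripsEulerChar_euclCycle {k : ℕ} (hkn : 2 * k < n) :
    ripsEulerChar (euclCycle n) (chordLength n k) =
      if n - 2 * k ∣ k then ((n - 2 * k : ℕ) : ℤ) else 0 := by
  classical
  rw [euclCycle_eq_image_stdAddChar, ripsEulerChar_image_univ ZMod.injective_stdAddChar,
    filter_congr fun B _ => by rw [diam_image_stdAddChar_le_iff (by omega), and_comm]]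
  simp only [pow_succ, mul_neg_one, sum_neg_distrib]
  rw [sum_neg_one_pow_card_isCyclicClique hkn]
  split_ifs <;> simp

end EuclideanCycle

section ExactFormula

open Finset

theorem sub_two_mul_div_mul_half {n r : ℕ} (hr : r ∣ n) (hodd : Odd r) :
    n - 2 * (n / r * (r / 2)) = n / r := by
  have hn : 2 * (n / r * (r / 2)) + n / r = n := by
    rw [← mul_left_comm, ← mul_add_one, Nat.two_mul_div_two_add_one_of_odd hodd,
      Nat.div_mul_cancel hr]
  exact Nat.sub_eq_of_eq_add' hn.symm

theorem sum_range_sub_two_mul_dvd {M : Type*} [AddCommMonoid M] (n : ℕ) (f : ℕ → M) :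
    ∑ k ∈ range ((n + 1) / 2) with n - 2 * k ∣ k, f k =
      ∑ r ∈ n.divisors with Odd r, f (n / r * (r / 2)) := by
  rcases eq_or_ne n 0 with rfl | hn
  · simp
  have hk : ∀ k ∈ {k ∈ range ((n + 1) / 2) | n - 2 * k ∣ k}, Odd (n / (n - 2 * k)) ∧
      n / (n - 2 * k) ∣ n ∧ n / (n / (n - 2 * k)) * (n / (n - 2 * k) / 2) = k := by
    intro k hk
    obtain ⟨hkN, hdvd⟩ := mem_filter.1 hk
    have hkn : 2 * k < n := by grind
    obtain ⟨r, hodd, hnr⟩ := exists_odd_eq_sub_two_mul_mul hdvd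
    have hr : r ∣ n := Dvd.intro_left _ hnr.symm
    have hdiv : n / r = n - 2 * k := Nat.div_eq_of_eq_mul_left hodd.pos hnr
    rw [Nat.div_eq_of_eq_mul_right (by omega) hnr]
    have := sub_two_mul_div_mul_half hr hodd
    exact ⟨hodd, hr, by omega⟩
  have hr : ∀ r ∈ {r ∈ n.divisors | Odd r}, n / r * (r / 2) < (n + 1) / 2 ∧
      n - 2 * (n / r * (r / 2)) = n / r := by
    intro r hr
    obtain ⟨hrn, hodd⟩ := mem_filter.1 hr
    have := sub_two_mul_div_mul_half (Nat.dvd_of_mem_divisors hrn) hodd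
    have := Nat.div_pos (Nat.divisor_le hrn) hodd.pos
    omega
  refine sum_nbij' (fun k => n / (n - 2 * k)) (fun r => n / r * (r / 2)) ?_ ?_ ?_ ?_ ?_
  · exact fun k h => mem_filter.2 ⟨Nat.mem_divisors.2 ⟨(hk k h).2.1, hn⟩, (hk k h).1⟩
  · intro r h
    rw [mem_filter, mem_range, (hr r h).2]
    exact ⟨(hr r h).1, dvd_mul_right _ _⟩
  · exact fun k h => (hk k h).2.2
  · intro r h
    rw [(hr r h).2, Nat.div_div_self (Nat.dvd_of_mem_divisors (mem_filter.1 h).1) hn]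
  · exact fun k h => by rw [(hk k h).2.2]

/-- The exponential `e ^ (-ℓ t)` for the chord of length `ℓ = 2 cos θ` of the unit circle which
makes the angle `θ` with the radii to its end points. -/
noncomputable def chordDecay (t θ : ℝ) : ℝ :=
  Real.exp (-2 * t * Real.cos θ)

/-- The contribution of the odd divisor `r` of `n` to `ripsMag (euclCycle n) t`. -/
noncomputable def euclCycleTerm (t : ℝ) (n r : ℕ) : ℝ :=
  n / r * (chordDecay t (π / (2 * r)) - chordDecay t (max 0 (π / (2 * r) - π / n)))

theorem exp_neg_chordLength_mul (n k : ℕ) (t : ℝ) :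
    Real.exp (-chordLength n k * t) = chordDecay t (chordAngle n k) := by
  rw [chordLength, chordDecay]
  ring_nf

theorem sub_two_mul_mul_sub_eq_euclCycleTerm {n r : ℕ} [NeZero n] (hr : r ∣ n) (hodd : Odd r)
    (t : ℝ) :
    ((n - 2 * (n / r * (r / 2)) : ℕ) : ℝ) *
      (Real.exp (-chordLength n (n / r * (r / 2)) * t) -
        Real.exp (-chordLength n (n / r * (r / 2) + 1) * t)) = euclCycleTerm t n r := by
  have hn : (n : ℝ) ≠ 0 := NeZero.ne _
  have hr0 : (r : ℝ) ≠ 0 := Nat.cast_ne_zero.2 hodd.pos.ne'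
  have hm := sub_two_mul_div_mul_half hr hodd
  have hmpos := Nat.div_pos (Nat.le_of_dvd (NeZero.pos n) hr) hodd.pos
  rw [hm]
  set k := n / r * (r / 2)
  have hangle : π / 2 - π * k / n = π / (2 * r) := by
    have hk : (n : ℝ) = n / r + 2 * k := by
      rw [← Nat.cast_div hr hr0]
      norm_cast
      omega
    field_simp at hk ⊢
    linarith
  have hangle' : π / 2 - π * (k + 1 : ℕ) / n = π / (2 * r) - π / n := by
    rw [← hangle]
    push_cast
    ring
  rw [exp_neg_chordLength_mul, exp_neg_chordLength_mul, chordAngle_of_le (by omega), hangle,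
    chordAngle, hangle', euclCycleTerm, Nat.cast_div hr hr0]

theorem ripsMag_euclCycle (n : ℕ) [NeZero n] (t : ℝ) :
    ripsMag (euclCycle n) t =
      Real.exp (-2 * t) + ∑ r ∈ n.divisors with Odd r, euclCycleTerm t n r := by
  have hmono := strictMonoOn_chordLength n
  have htop : chordLength n ((n + 1) / 2) = 2 := by
    rw [chordLength, chordAngle_eq_zero (by omega), Real.cos_zero, mul_one]
  have hne : (euclCycle n).Nonempty := by
    rw [euclCycle_eq_image_stdAddChar]
    exact univ_nonempty.image _
  have hdiam : ∀ B ⊆ euclCycle n, B.Nonempty →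
      ∃ k ≤ (n + 1) / 2, Metric.diam (B : Set ℂ) = chordLength n k := fun B hB hB' =>
    (exists_diam_eq_chordLength hB hB').imp fun k hk => ⟨by omega, hk.2⟩
  have hone : ripsEulerChar (euclCycle n) (chordLength n ((n + 1) / 2)) = 1 := by
    obtain ⟨k, hk, hdk⟩ := hdiam _ subset_rfl hne
    exact ripsEulerChar_of_diam_le hne (hdk.trans_le (hmono.monotoneOn hk Set.self_mem_Iic hk))
  rw [ripsMag_eq_sum_ripsEulerChar hmono hdiam, hone, htop, Int.cast_one, one_mul]
  congr 1
  calc _ = ∑ k ∈ range ((n + 1) / 2) with n - 2 * k ∣ k, ((n - 2 * k : ℕ) : ℝ) *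
        (Real.exp (-chordLength n k * t) - Real.exp (-chordLength n (k + 1) * t)) := by
        rw [sum_filter]
        refine sum_congr rfl fun k hk => ?_
        rw [mem_range] at hk
        rw [ripsEulerChar_euclCycle (by omega)]
        split_ifs <;> simp
    _ = _ := by
        rw [sum_range_sub_two_mul_dvd]
        refine sum_congr rfl fun r hr => ?_
        obtain ⟨hrn, hodd⟩ := mem_filter.1 hr
        exact sub_two_mul_mul_sub_eq_euclCycleTerm (Nat.dvd_of_mem_divisors hrn) hodd t

end ExactFormula

section Supremum

open Finset Filter Topology

theorem hasDerivAt_chordDecay (t θ : ℝ) :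
    HasDerivAt (chordDecay t) (2 * t * Real.sin θ * chordDecay t θ) θ :=
  ((Real.hasDerivAt_cos θ).const_mul (-2 * t)).exp.congr_deriv (by rw [chordDecay]; ring)

theorem convexOn_chordDecay {t : ℝ} (ht : 0 ≤ t) :
    ConvexOn ℝ (Set.Icc (-(π / 2)) (π / 2)) (chordDecay t) := by
  have hcos : ConvexOn ℝ (Set.Icc (-(π / 2)) (π / 2)) fun θ => -2 * t * Real.cos θ :=
    (strictConcaveOn_cos_Icc.concaveOn.neg.smul (mul_nonneg zero_le_two ht)).congr fun θ _ => by
      simp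
  refine (convexOn_exp.subset (Set.subset_univ _) ?_).comp hcos (Real.exp_monotone.monotoneOn _)
  exact (hcos.1.isPreconnected.image _ (by fun_prop)).ordConnected.convex

theorem monotoneOn_chordDecay {t : ℝ} (ht : 0 ≤ t) :
    MonotoneOn (chordDecay t) (Set.Icc 0 π) := fun θ hθ φ hφ hle => by
  have hcos := Real.strictAntiOn_cos.antitoneOn hθ hφ hle
  rw [chordDecay, chordDecay, Real.exp_le_exp]
  nlinarith

theorem chordDecay_sub_le {t : ℝ} (ht : 0 ≤ t) {θ φ : ℝ} (hφ : -(π / 2) ≤ φ) (hle : φ ≤ θ)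
    (hθ : θ ≤ π / 2) :
    chordDecay t θ - chordDecay t φ ≤ (θ - φ) * (2 * t * Real.sin θ * chordDecay t θ) := by
  rcases hle.eq_or_lt with rfl | hlt
  · simp
  have hslope : slope (chordDecay t) φ θ ≤ 2 * t * Real.sin θ * chordDecay t θ :=
    (convexOn_chordDecay ht).slope_le_of_hasDerivAt ⟨hφ, hle.trans hθ⟩
      ⟨hφ.trans hle, hθ⟩ hlt (hasDerivAt_chordDecay t θ)
  rwa [slope_def_field, div_le_iff₀' (sub_pos.2 hlt)] at hslope

theorem two_mul_pi_mul_euclSeriesTerm (t : ℝ) (r : ℕ) :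
    2 * π * t * euclSeriesTerm t r =
      π / r * (2 * t * Real.sin (π / (2 * r)) * chordDecay t (π / (2 * r))) := by
  rw [euclSeriesTerm, chordDecay]
  ring

theorem pi_div_two_mul_mem_Icc (r : ℕ) : π / (2 * r) ∈ Set.Icc 0 (π / 2) := by
  refine ⟨by positivity, ?_⟩
  rcases r.eq_zero_or_pos with rfl | hr
  · simp [Real.pi_nonneg, div_nonneg]
  · have hr' : (1 : ℝ) ≤ r := mod_cast hr
    exact div_le_div_of_nonneg_left Real.pi_nonneg two_pos (by linarith)

theorem euclCycleTerm_nonneg {t : ℝ} (ht : 0 ≤ t) (n r : ℕ) : 0 ≤ euclCycleTerm t n r := by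
  have hθ := pi_div_two_mul_mem_Icc r
  have hn : 0 ≤ π / n := by positivity
  refine mul_nonneg (by positivity) (sub_nonneg.2 (monotoneOn_chordDecay ht ?_ ?_ ?_))
  · exact ⟨le_max_left _ _, max_le Real.pi_nonneg (by linarith [hθ.2, Real.pi_pos])⟩
  · exact ⟨hθ.1, by linarith [hθ.2, Real.pi_pos]⟩
  · exact max_le hθ.1 (by linarith)

theorem euclCycleTerm_le {t : ℝ} (ht : 0 ≤ t) (n : ℕ) [NeZero n] (r : ℕ) :
    euclCycleTerm t n r ≤ 2 * π * t * euclSeriesTerm t r := by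
  obtain ⟨hθ, hθ'⟩ := pi_div_two_mul_mem_Icc r
  rw [euclCycleTerm, two_mul_pi_mul_euclSeriesTerm]
  set θ := π / (2 * r : ℝ)
  have hn : (0 : ℝ) < n := Nat.cast_pos.2 (NeZero.pos n)
  have hstep : θ - max 0 (θ - π / n) ≤ π / n := by linarith [le_max_right 0 (θ - π / n)]
  have hderiv : 0 ≤ 2 * t * Real.sin θ * chordDecay t θ := by
    have := Real.sin_nonneg_of_nonneg_of_le_pi hθ (by linarith)
    have := Real.exp_nonneg (-2 * t * Real.cos θ)
    rw [chordDecay]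
    positivity
  calc n / r * (chordDecay t θ - chordDecay t (max 0 (θ - π / n)))
      ≤ n / r * ((θ - max 0 (θ - π / n)) * (2 * t * Real.sin θ * chordDecay t θ)) := by
        gcongr
        refine chordDecay_sub_le ht ?_ (max_le hθ (sub_le_self θ (by positivity))) hθ'
        exact (by linarith : -(π / 2) ≤ 0).trans (le_max_left _ _)
    _ ≤ n / r * (π / n * (2 * t * Real.sin θ * chordDecay t θ)) := by gcongr
    _ = π / r * (2 * t * Real.sin θ * chordDecay t θ) := by field_simp

theorem tendsto_euclCycleTerm (t : ℝ) {r : ℕ} (hr : 0 < r) :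
    Tendsto (fun n => euclCycleTerm t n r) atTop (𝓝 (2 * π * t * euclSeriesTerm t r)) := by
  have hstep : Tendsto (fun n : ℕ => -(π / n)) atTop (𝓝[≠] 0) := by
    refine tendsto_nhdsWithin_iff.2 ⟨?_, ?_⟩
    · simpa using (tendsto_const_div_atTop_nhds_zero_nat π).neg
    · filter_upwards [eventually_gt_atTop 0] with n hn
      have : (n : ℝ) ≠ 0 := Nat.cast_ne_zero.2 hn.ne'
      simp [Real.pi_ne_zero, this]
  have hslope := ((hasDerivAt_chordDecay t (π / (2 * r))).tendsto_slope_zero.comp hstep).const_mul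
    (π / r)
  rw [two_mul_pi_mul_euclSeriesTerm]
  refine hslope.congr' ?_
  filter_upwards [eventually_ge_atTop (2 * r)] with n hn
  have hr' : (0 : ℝ) < r := Nat.cast_pos.2 hr
  have hn' : (2 * r : ℝ) ≤ n := mod_cast hn
  have hmax : max 0 (π / (2 * r) - π / n) = π / (2 * r) + -(π / n) := by
    rw [← sub_eq_add_neg]
    exact max_eq_right (sub_nonneg.2 (by gcongr))
  have hn0 : (0 : ℝ) < n := by linarith
  rw [euclCycleTerm, hmax, Function.comp_apply, smul_eq_mul]
  field_simp
  ring

theorem euclSeriesTerm_le {t : ℝ} (ht : 0 ≤ t) (r : ℕ) :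
    euclSeriesTerm t r ≤ π / 2 * (1 / (r : ℝ) ^ 2) := by
  obtain ⟨hθ, hθ'⟩ := pi_div_two_mul_mem_Icc r
  have hcos := Real.cos_nonneg_of_neg_pi_div_two_le_of_le (by linarith) hθ'
  have hexp : Real.exp (-2 * t * Real.cos (π / (2 * r))) ≤ 1 := by
    rw [Real.exp_le_one_iff]
    nlinarith [mul_nonneg ht hcos]
  have hsin0 := Real.sin_nonneg_of_nonneg_of_le_pi hθ (by linarith)
  calc euclSeriesTerm t r ≤ 1 / r * 1 * (π / (2 * r)) := by
        rw [euclSeriesTerm]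
        gcongr
        exact Real.sin_le hθ
    _ = π / 2 * (1 / (r : ℝ) ^ 2) := by ring

theorem euclSeriesTerm_nonneg (t : ℝ) (r : ℕ) : 0 ≤ euclSeriesTerm t r := by
  obtain ⟨hθ, hθ'⟩ := pi_div_two_mul_mem_Icc r
  have := Real.sin_nonneg_of_nonneg_of_le_pi hθ (by linarith)
  rw [euclSeriesTerm]
  positivity

theorem ite_odd_euclSeriesTerm_nonneg (t : ℝ) (r : ℕ) :
    0 ≤ if Odd r then euclSeriesTerm t r else 0 := by
  split_ifs
  exacts [euclSeriesTerm_nonneg t r, le_rfl]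

theorem summable_ite_odd_euclSeriesTerm {t : ℝ} (ht : 0 ≤ t) :
    Summable fun r => if Odd r then euclSeriesTerm t r else 0 := by
  refine .of_nonneg_of_le (ite_odd_euclSeriesTerm_nonneg t) (fun r => ?_)
    ((Real.summable_one_div_nat_pow.2 one_lt_two).mul_left (π / 2))
  split_ifs
  · exact euclSeriesTerm_le ht r
  · positivity

theorem ripsMag_euclCycle_le (n : ℕ) [NeZero n] {t : ℝ} (ht : 0 ≤ t) :
    ripsMag (euclCycle n) t ≤ Real.exp (-2 * t) + 2 * π * t *
      ∑' r : ℕ, (if Odd r then euclSeriesTerm t r else 0) := by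
  rw [ripsMag_euclCycle]
  gcongr
  calc ∑ r ∈ n.divisors with Odd r, euclCycleTerm t n r
      ≤ ∑ r ∈ n.divisors with Odd r, 2 * π * t * euclSeriesTerm t r :=
        sum_le_sum fun r _ => euclCycleTerm_le ht n r
    _ = 2 * π * t * ∑ r ∈ n.divisors, (if Odd r then euclSeriesTerm t r else 0) := by
        rw [← mul_sum, sum_filter]
    _ ≤ _ := by
        gcongr
        exact (summable_ite_odd_euclSeriesTerm ht).sum_le_tsum _ fun r _ =>
          ite_odd_euclSeriesTerm_nonneg t r

theorem sum_range_euclCycleTerm_le_ripsMag {n R : ℕ} [NeZero n] {t : ℝ} (ht : 0 ≤ t)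
    (hR : R.factorial ∣ n) :
    Real.exp (-2 * t) + ∑ r ∈ range R with Odd r, euclCycleTerm t n r ≤
      ripsMag (euclCycle n) t := by
  rw [ripsMag_euclCycle]
  refine add_le_add_right (sum_le_sum_of_subset_of_nonneg (fun r hr => ?_) fun r _ _ =>
    euclCycleTerm_nonneg ht n r) _
  obtain ⟨hrR, hodd⟩ := mem_filter.1 hr
  have hdvd := (Nat.dvd_factorial hodd.pos (mem_range.1 hrR).le).trans hR
  exact mem_filter.2 ⟨Nat.mem_divisors.2 ⟨hdvd, NeZero.ne n⟩, hodd⟩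

theorem sum_range_le_of_ripsMag_euclCycle_le {t b : ℝ} (ht : 0 ≤ t)
    (hb : ∀ n, 1 ≤ n → ripsMag (euclCycle n) t ≤ b) (R : ℕ) :
    Real.exp (-2 * t) + 2 * π * t *
      ∑ r ∈ range R, (if Odd r then euclSeriesTerm t r else 0) ≤ b := by
  rw [← sum_filter, mul_sum]
  have hlim : Tendsto (fun n => Real.exp (-2 * t) + ∑ r ∈ range R with Odd r, euclCycleTerm t n r)
      atTop (𝓝 (Real.exp (-2 * t) + ∑ r ∈ range R with Odd r, 2 * π * t * euclSeriesTerm t r)) :=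
    tendsto_const_nhds.add <| tendsto_finsetSum _ fun r hr =>
      tendsto_euclCycleTerm t (mem_filter.1 hr).2.pos
  have hmul : Tendsto (fun M => R.factorial * (M + 1)) atTop atTop :=
    tendsto_atTop_mono (fun M => Nat.le_mul_of_pos_left (M + 1) R.factorial_pos)
      (tendsto_add_atTop_nat 1)
  refine le_of_tendsto' (hlim.comp hmul) fun M => ?_
  have : NeZero (R.factorial * (M + 1)) := ⟨by positivity⟩
  exact (sum_range_euclCycleTerm_le_ripsMag ht (dvd_mul_right _ _)).trans (hb _ NeZero.one_le)

end Supremum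

/-- for every `t > 0`,
`sup_{n ≥ 1} |tC_n^eucl|_Rips = e^{−2t} + 2πt Σ_{r odd} (1/r) e^{−2t cos(π/(2r))} sin(π/(2r))`. -/
theorem ripsMag_euclCycle_sup (t : ℝ) (ht : 0 < t) :
    IsLUB {x : ℝ | ∃ n : ℕ, 1 ≤ n ∧ x = ripsMag (euclCycle n) t}
      (Real.exp (-2 * t) + 2 * π * t *
        ∑' r : ℕ, (if Odd r then euclSeriesTerm t r else 0)) := by
  constructor
  · rintro _ ⟨n, hn, rfl⟩
    have : NeZero n := ⟨by omega⟩
    exact ripsMag_euclCycle_le _ ht.le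
  · intro b hb
    have hpos : 0 < 2 * π * t := by positivity
    have hpartial := sum_range_le_of_ripsMag_euclCycle_le ht.le fun n hn => hb ⟨n, hn, rfl⟩
    have htsum : ∑' r : ℕ, (if Odd r then euclSeriesTerm t r else 0) ≤
        (b - Real.exp (-2 * t)) / (2 * π * t) :=
      Real.tsum_le_of_sum_range_le (ite_odd_euclSeriesTerm_nonneg t) fun R =>
        (le_div_iff₀' hpos).2 (le_sub_iff_add_le'.2 (hpartial R))
    exact le_sub_iff_add_le'.1 ((le_div_iff₀' hpos).1 htsum)
end

section
/- For every t > 0, the lower limit of the sequence n ↦ |tC_n^geo|_Rips satisfies liminf_{n→∞} |tC_n^geo|_Rips = e^{−πt} + 2πt. -/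
open scoped BigOperators Real

open scoped Classical in
/-- The geodesic cycle `C_n^geo`: `n` equally spaced points on the circle
`ℝ/2πℤ` of total arclength `2π`, with the geodesic metric
`d(i,j) = (2π/n)·min(|i−j|, n−|i−j|)`. -/
noncomputable def geoCycle (n : ℕ) : Finset (AddCircle (2 * π : ℝ)) :=
  (Finset.range n).image (fun k => ((2 * π * k / n : ℝ) : AddCircle (2 * π : ℝ)))


/-! The sets of diameter at most `2πr/n` form the Vietoris–Rips complex `VR(n, r)` of the cycle,
and summation by parts over the scales `r` gives
`|tC_n| = e^{-πt·2⌊n/2⌋/n} + Σ_{r < ⌊n/2⌋} χ(VR(n, r)) (e^{-2πrt/n} - e^{-2π(r+1)t/n})`.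
The term `r = 0` is `n (1 - e^{-2πt/n}) → 2πt`, so everything rests on the signs of the
`χ(VR(n, r))` with `0 < r < n/2`.

Call a vertex `x` of a simplex `A` a *leader* if `A ∪ {x + r}` is still a simplex. A nonempty
simplex has a leader, so the leaders of `A` span a full simplex, of Euler characteristic `1`;
inserting `Σ_{∅ ≠ S ⊆ leaders A} (-1)^{#S-1} = 1` into `χ` and exchanging the sums groups the
simplices `A` by the sets `S` of leaders they have. If `x ∈ S` and `x + r ∉ S`, toggling `x + r`
in `A` cancels the contribution of `S`; if `S + r ⊆ S`, the only possible `A` is `S` itself. Hence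
`χ(VR(n, r))` counts the nonempty simplices `S` with `S + r ⊆ S`: it is nonnegative, and it
vanishes for `n` prime, as then `S` would be all of `ℤ/n`, which is not a simplex. -/

section EulerCharacteristic

open Finset

variable {α : Type*}

/-- The Euler characteristic `Σ (-1)^{#A - 1}` of a finite abstract simplicial complex, encoded as
the family of its simplices. The empty set may or may not belong to the family; it is not counted.
No closure under subsets is imposed. -/
def eulerChar (K : Finset (Finset α)) : ℤ :=
  ∑ A ∈ K with A.Nonempty, (-1) ^ (#A - 1)

lemma eulerChar_eq_neg_sum (K : Finset (Finset α)) :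
    eulerChar K = -∑ A ∈ K with A.Nonempty, (-1) ^ #A := by
  rw [eulerChar, ← sum_neg_distrib]
  refine sum_congr rfl fun A hA => ?_
  obtain ⟨k, hk⟩ := Nat.exists_eq_add_one.2 (mem_filter.1 hA).2.card_pos
  rw [hk, Nat.add_sub_cancel, pow_succ]
  ring

lemma eulerChar_powerset {T : Finset α} (hT : T.Nonempty) : eulerChar T.powerset = 1 := by
  classical
  have hempty : T.powerset.filter (fun A => ¬ A.Nonempty) = {∅} := by
    ext A
    simp +contextual [not_nonempty_iff_eq_empty]
  have hsum := sum_filter_add_sum_filter_not T.powerset (fun A => A.Nonempty)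
    (fun A => (-1 : ℤ) ^ #A)
  rw [hempty, sum_singleton, card_empty, sum_powerset_neg_one_pow_card_of_nonempty hT] at hsum
  rw [eulerChar_eq_neg_sum]
  lia

lemma eulerChar_eq_sum_sum_of_nonempty_iff [Fintype α] [DecidableEq α] {K : Finset (Finset α)}
    {L : Finset α → Finset α} (hL : ∀ A ∈ K, (L A).Nonempty ↔ A.Nonempty) :
    eulerChar K = ∑ S with S.Nonempty, (-1) ^ #S * ∑ A ∈ K with S ⊆ L A, (-1) ^ #A := by
  have hweight : ∀ A ∈ K, ∑ S ∈ (L A).powerset with S.Nonempty, (-1 : ℤ) ^ #S =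
      if A.Nonempty then -1 else 0 := by
    intro A hA
    split_ifs with hne
    · rw [← neg_eq_iff_eq_neg, ← eulerChar_eq_neg_sum, eulerChar_powerset ((hL A hA).2 hne)]
    · rw [← hL A hA, not_nonempty_iff_eq_empty] at hne
      simp [hne, filter_singleton]
  calc eulerChar K = ∑ A ∈ K, ∑ S ∈ (L A).powerset with S.Nonempty, (-1) ^ #S * (-1) ^ #A := by
        rw [eulerChar_eq_neg_sum, sum_filter, ← sum_neg_distrib]
        refine sum_congr rfl fun A hA => ?_
        rw [← sum_mul, hweight A hA]
        split_ifs <;> simp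
    _ = ∑ S with S.Nonempty, ∑ A ∈ K with S ⊆ L A, (-1) ^ #S * (-1) ^ #A :=
        sum_comm' fun A S => by simp only [mem_filter, mem_powerset, mem_univ, true_and]; tauto
    _ = _ := by simp only [mul_sum]

lemma sum_neg_one_pow_card_eq_zero_of_insert_mem_iff [DecidableEq α] {K : Finset (Finset α)} {v : α}
    (hv : ∀ A, v ∉ A → (insert v A ∈ K ↔ A ∈ K)) : ∑ A ∈ K, (-1 : ℤ) ^ #A = 0 := by
  refine sum_involution (fun A _ => if v ∈ A then A.erase v else insert v A) ?_ ?_ ?_ ?_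
  · intro A _
    split_ifs with hvA
    · rw [← card_erase_add_one hvA]
      ring
    · rw [card_insert_of_notMem hvA]
      ring
  · intro A _ _
    split_ifs with hvA
    · exact fun h => erase_eq_self.1 h hvA
    · exact fun h => hvA (insert_eq_self.1 h)
  · intro A hA
    by_cases hvA : v ∈ A
    · rwa [if_pos hvA, ← hv _ (notMem_erase v A), insert_erase hvA]
    · rwa [if_neg hvA, hv A hvA]
  · intro A _
    by_cases hvA : v ∈ A <;> simp [hvA]

end EulerCharacteristic

section RipsMagnitude

open Finset

lemma sum_mul_comp_eq_sum_range {ι R : Type*} [Ring R] (s : Finset ι) (w : ι → R) {d : ι → ℕ}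
    (f : ℕ → R) {D : ℕ} (hd : ∀ i ∈ s, d i ≤ D) :
    ∑ i ∈ s, w i * f (d i) = (∑ i ∈ s, w i) * f D +
      ∑ r ∈ range D, (∑ i ∈ s with d i ≤ r, w i) * (f r - f (r + 1)) := by
  have htelescope : ∀ i ∈ s,
      f (d i) = f D + ∑ r ∈ range D, if d i ≤ r then f r - f (r + 1) else 0 := by
    intro i hi
    have hIco : (range D).filter (d i ≤ ·) = Ico (d i) D := by
      ext r
      simp [and_comm]
    have hsub := sum_Ico_sub f (hd i hi)
    rw [← neg_inj, ← sum_neg_distrib] at hsub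
    simp only [neg_sub] at hsub
    rw [← sum_filter, hIco, hsub, add_sub_cancel]
  simp only [sum_mul, sum_filter]
  rw [sum_comm, ← sum_add_distrib]
  refine sum_congr rfl fun i hi => ?_
  simp only [htelescope i hi, mul_add, mul_sum, mul_ite, ite_mul, mul_zero, zero_mul]

variable {α Y : Type*} [MetricSpace Y] {e : α → Y}

lemma ripsMag_map (s : Finset α) (he : Function.Injective e) (t : ℝ) :
    ripsMag (s.map ⟨e, he⟩) t = ∑ A ∈ s.powerset with A.Nonempty,
      (-1) ^ (#A - 1) * Real.exp (-Metric.diam (e '' A) * t) := by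
  have hfaces : (s.map ⟨e, he⟩).powerset.filter (fun B => B.Nonempty) =
      (s.powerset.filter (fun A => A.Nonempty)).map (mapEmbedding ⟨e, he⟩).toEmbedding := by
    ext B
    simp only [mem_filter, mem_powerset, subset_map_iff, mem_map, RelEmbedding.coe_toEmbedding,
      mapEmbedding_apply]
    constructor
    · rintro ⟨⟨A, hA, rfl⟩, hne⟩
      exact ⟨A, ⟨hA, map_nonempty.1 hne⟩, rfl⟩
    · rintro ⟨A, ⟨hA, hne⟩, rfl⟩
      exact ⟨⟨A, hA, rfl⟩, hne.map⟩
  simp [ripsMag, hfaces]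

lemma ripsMag_map_univ_eq_sum_eulerChar [Fintype α] [Nonempty α] (he : Function.Injective e)
    {d : Finset α → ℕ} {c : ℝ} {D : ℕ} (hdiam : ∀ A : Finset α, Metric.diam (e '' A) = c * d A)
    (hd : ∀ A, d A ≤ D) (t : ℝ) :
    ripsMag (univ.map ⟨e, he⟩) t = Real.exp (-(c * D) * t) + ∑ r ∈ range D,
      eulerChar {A : Finset α | d A ≤ r} *
        (Real.exp (-(c * r) * t) - Real.exp (-(c * (r + 1 : ℕ)) * t)) := by
  have htotal := congrArg (Int.cast : ℤ → ℝ) (eulerChar_powerset (univ_nonempty (α := α)))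
  simp only [eulerChar, powerset_univ, Int.cast_sum, Int.cast_pow, Int.cast_neg, Int.cast_one]
    at htotal ⊢
  simp only [ripsMag_map, hdiam, powerset_univ]
  rw [sum_mul_comp_eq_sum_range _ _ (fun r : ℕ => Real.exp (-(c * r) * t)) fun A _ => hd A, htotal,
    one_mul]
  simp only [filter_comm]

end RipsMagnitude

section CyclicComplex

open Finset

lemma eq_univ_of_add_mem_of_prime_card {G : Type*} [AddGroup G] [Fintype G]
    (hG : (Nat.card G).Prime) {g : G} (hg : g ≠ 0) {S : Finset G} (hne : S.Nonempty)
    (hS : ∀ x ∈ S, x + g ∈ S) : S = univ := by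
  have : Fact (Nat.card G).Prime := ⟨hG⟩
  obtain ⟨x, hx⟩ := hne
  have hmul : ∀ k : ℕ, x + k • g ∈ S := by
    intro k
    induction k with
    | zero => simpa using hx
    | succ k ih => simpa only [succ_nsmul, ← add_assoc] using hS _ ih
  refine eq_univ_of_forall fun y => ?_
  obtain ⟨k, hk⟩ : -x + y ∈ AddSubmonoid.multiples g := mem_multiples_of_prime_card rfl hg
  simpa [hk] using hmul k

variable {n r : ℕ}

lemma natAbs_valMinAbs_sub_comm (x y : ZMod n) :
    (x - y).valMinAbs.natAbs = (y - x).valMinAbs.natAbs := by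
  rw [← neg_sub, ZMod.natAbs_valMinAbs_neg]

/-- The largest cyclic distance `min |x - y| (n - |x - y|)` between two elements of `A`: the
diameter of the corresponding subset of `C_n^geo` in units of `2π / n`. -/
def cyclicDiam (A : Finset (ZMod n)) : ℕ :=
  (A ×ˢ A).sup fun p => (p.1 - p.2).valMinAbs.natAbs

lemma cyclicDiam_le_iff {A : Finset (ZMod n)} :
    cyclicDiam A ≤ r ↔ ∀ x ∈ A, ∀ y ∈ A, (x - y).valMinAbs.natAbs ≤ r := by
  simp only [cyclicDiam, Finset.sup_le_iff, mem_product, Prod.forall, and_imp]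
  tauto

lemma cyclicDiam_le_zero_iff {A : Finset (ZMod n)} : cyclicDiam A ≤ 0 ↔ #A ≤ 1 := by
  rw [cyclicDiam_le_iff, card_le_one]
  simp only [Nat.le_zero, Int.natAbs_eq_zero, ZMod.valMinAbs_eq_zero, sub_eq_zero]

lemma cyclicDiam_mono {A B : Finset (ZMod n)} (h : A ⊆ B) : cyclicDiam A ≤ cyclicDiam B :=
  sup_mono (product_subset_product h h)

lemma cyclicDiam_insert_le_iff {A : Finset (ZMod n)} {a : ZMod n} :
    cyclicDiam (insert a A) ≤ r ↔
      cyclicDiam A ≤ r ∧ ∀ y ∈ A, (y - a).valMinAbs.natAbs ≤ r := by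
  simp only [cyclicDiam_le_iff, forall_mem_insert, natAbs_valMinAbs_sub_comm a, sub_self,
    ZMod.valMinAbs_zero, Int.natAbs_zero, zero_le, true_and, forall_and]
  tauto

variable [NeZero n]

lemma cyclicDiam_le_half (A : Finset (ZMod n)) : cyclicDiam A ≤ n / 2 :=
  cyclicDiam_le_iff.2 fun _ _ _ _ => ZMod.natAbs_valMinAbs_le _

lemma natAbs_valMinAbs_sub_natCast_le_iff (hr : 2 * r < n) (a : ZMod n) :
    (a - r).valMinAbs.natAbs ≤ r ↔ a.val ≤ 2 * r := by
  have hval : (r : ZMod n).val = r := ZMod.val_cast_of_lt (by lia)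
  have ha := a.val_lt
  rcases le_total r a.val with h | h
  · rw [ZMod.valMinAbs_natAbs_eq_min, ZMod.val_sub (by lia)]
    lia
  · rw [natAbs_valMinAbs_sub_comm, ZMod.valMinAbs_natAbs_eq_min, ZMod.val_sub (by lia)]
    lia

variable (n r) in
/-- The Vietoris–Rips complex of the cycle `ℤ/n` at cyclic scale `r`, as the family of its
simplices including the empty one. -/
def cyclicRips : Finset (Finset (ZMod n)) :=
  {A | cyclicDiam A ≤ r}

lemma mem_cyclicRips {A : Finset (ZMod n)} : A ∈ cyclicRips n r ↔ cyclicDiam A ≤ r := by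
  simp [cyclicRips]

lemma eulerChar_cyclicRips_zero : eulerChar (cyclicRips n 0) = n := by
  have hpoints : {A ∈ cyclicRips n 0 | A.Nonempty} = powersetCard 1 univ := by
    ext A
    rw [mem_filter, mem_cyclicRips, cyclicDiam_le_zero_iff, ← card_pos, mem_powersetCard_univ]
    lia
  rw [eulerChar, hpoints, sum_powersetCard 1 univ fun k => (-1 : ℤ) ^ (k - 1)]
  simp [ZMod.card]

/-- The leaders of a simplex `A` of `cyclicRips n r`: the vertices `x` for which `x + r` can be
added to `A`. -/
def leaders (r : ℕ) (A : Finset (ZMod n)) : Finset (ZMod n) :=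
  {x ∈ A | cyclicDiam (insert (x + r) A) ≤ r}

lemma mem_leaders {A : Finset (ZMod n)} (hA : A ∈ cyclicRips n r) {x : ZMod n} :
    x ∈ leaders r A ↔ x ∈ A ∧ ∀ y ∈ A, (y - x - r).valMinAbs.natAbs ≤ r := by
  simp [leaders, cyclicDiam_insert_le_iff, mem_cyclicRips.1 hA, sub_sub]

/-- As seen from `x - r`, with `x ∈ A`, the simplex `A` lies in the arc `[0, 2r]`, which does not
wrap around; its first vertex in this arc is a leader. -/
lemma leaders_nonempty_iff (hr : 2 * r < n) {A : Finset (ZMod n)} (hA : A ∈ cyclicRips n r) :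
    (leaders r A).Nonempty ↔ A.Nonempty := by
  refine ⟨fun h => h.mono (filter_subset _ _), fun ⟨x, hx⟩ => ?_⟩
  obtain ⟨y, hy, hmin⟩ := exists_min_image A (fun y => (y - (x - r)).val) ⟨x, hx⟩
  refine ⟨y, (mem_leaders hA).2 ⟨hy, fun z hz => ?_⟩⟩
  have harc : (z - (x - r)).val ≤ 2 * r := by
    rw [← natAbs_valMinAbs_sub_natCast_le_iff hr, sub_sub, sub_add_cancel]
    exact cyclicDiam_le_iff.1 (mem_cyclicRips.1 hA) z hz x hx
  rw [natAbs_valMinAbs_sub_natCast_le_iff hr, ← sub_sub_sub_cancel_right z y (x - r),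
    ZMod.val_sub (hmin z hz)]
  lia

lemma subset_leaders_insert_iff {A S : Finset (ZMod n)} {x : ZMod n} (hx : x ∈ S)
    (hxr : x + r ∉ S) :
    insert (x + r : ZMod n) A ∈ cyclicRips n r ∧ S ⊆ leaders r (insert (x + r : ZMod n) A) ↔
      A ∈ cyclicRips n r ∧ S ⊆ leaders r A := by
  constructor
  · rintro ⟨hins, hS⟩
    have hA : A ∈ cyclicRips n r :=
      mem_cyclicRips.2 ((cyclicDiam_mono (subset_insert _ _)).trans (mem_cyclicRips.1 hins))
    refine ⟨hA, fun y hy => ?_⟩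
    obtain ⟨hyA, hyr⟩ := (mem_leaders hins).1 (hS hy)
    exact (mem_leaders hA).2 ⟨mem_of_mem_insert_of_ne hyA (ne_of_mem_of_not_mem hy hxr),
      fun z hz => hyr z (mem_insert_of_mem hz)⟩
  · rintro ⟨hA, hS⟩
    have hins := mem_cyclicRips.2 (mem_filter.1 (hS hx)).2
    refine ⟨hins, fun y hy => ?_⟩
    obtain ⟨hyA, hyr⟩ := (mem_leaders hA).1 (hS hy)
    refine (mem_leaders hins).2 ⟨mem_insert_of_mem hyA, forall_mem_insert _ _ _ |>.2 ⟨?_, hyr⟩⟩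
    rw [sub_sub, add_sub_add_right_eq_sub]
    exact cyclicDiam_le_iff.1 (mem_cyclicRips.1 hA) x (mem_filter.1 (hS hx)).1 y hyA

/-- If `y ∈ A` is seen from `x ∈ S` at position `y - x ∈ [0, 2r]`, then from `x + 2r ∈ S` it is seen
at a larger position, after wrapping around, unless `y = x + 2r`. So take `y - x` maximal. -/
lemma eq_of_subset_leaders (hr : 2 * r < n) {A S : Finset (ZMod n)} (hA : A ∈ cyclicRips n r)
    (hne : S.Nonempty) (hclosed : ∀ x ∈ S, x + r ∈ S) (hS : S ⊆ leaders r A) : A = S := by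
  refine Subset.antisymm (fun y hy => ?_) (hS.trans (filter_subset _ _))
  obtain ⟨x, hx, hmax⟩ := exists_max_image S (fun x => (y - x).val) hne
  set b := y - (x + r + r) with hb
  have hyx : y - x = b + (2 * r : ℕ) := by
    rw [hb]
    push_cast
    ring
  have hlast : b.val ≤ (y - x).val := hmax _ (hclosed _ (hclosed x hx))
  have hle : (y - x).val ≤ 2 * r := by
    rw [← natAbs_valMinAbs_sub_natCast_le_iff hr]
    exact ((mem_leaders hA).1 (hS hx)).2 y hy
  have hval : ((2 * r : ℕ) : ZMod n).val = 2 * r := ZMod.val_cast_of_lt hr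
  have hzero : b.val = 0 := by
    rw [hyx] at hlast hle
    rcases lt_or_ge (b.val + ((2 * r : ℕ) : ZMod n).val) n with hlt | hge
    · have := ZMod.val_add_of_lt hlt
      lia
    · have := ZMod.val_add_val_of_le hge
      lia
  rw [ZMod.val_eq_zero, sub_eq_zero] at hzero
  exact hzero ▸ hclosed _ (hclosed x hx)

lemma subset_leaders_of_add_mem {S : Finset (ZMod n)} (hS : S ∈ cyclicRips n r)
    (hclosed : ∀ x ∈ S, x + r ∈ S) : S ⊆ leaders r S := fun x hx =>
  mem_filter.2 ⟨hx, by rwa [insert_eq_of_mem (hclosed x hx), ← mem_cyclicRips]⟩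

lemma sum_subset_leaders_neg_one_pow_card (hr : 2 * r < n) {S : Finset (ZMod n)}
    (hne : S.Nonempty) :
    ∑ A ∈ cyclicRips n r with S ⊆ leaders r A, (-1 : ℤ) ^ #A =
      if S ∈ cyclicRips n r ∧ ∀ x ∈ S, x + r ∈ S then (-1) ^ #S else 0 := by
  by_cases hclosed : ∀ x ∈ S, x + r ∈ S
  · have hfilter : {A ∈ cyclicRips n r | S ⊆ leaders r A} = {A ∈ cyclicRips n r | A = S} := by
      refine filter_congr fun A hA => ⟨eq_of_subset_leaders hr hA hne hclosed, ?_⟩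
      rintro rfl
      exact subset_leaders_of_add_mem hA hclosed
    rw [hfilter, filter_eq']
    split_ifs <;> simp_all
  · rw [if_neg fun h => hclosed h.2]
    push Not at hclosed
    obtain ⟨x, hx, hxr⟩ := hclosed
    refine sum_neg_one_pow_card_eq_zero_of_insert_mem_iff (v := x + r) fun A _ => ?_
    simp only [mem_filter]
    exact subset_leaders_insert_iff hx hxr

theorem eulerChar_cyclicRips (hr : 2 * r < n) :
    eulerChar (cyclicRips n r) =
      #{S ∈ cyclicRips n r | S.Nonempty ∧ ∀ x ∈ S, x + (r : ZMod n) ∈ S} := by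
  calc eulerChar (cyclicRips n r)
    _ = ∑ S with S.Nonempty, (-1) ^ #S * ∑ A ∈ cyclicRips n r with S ⊆ leaders r A, (-1) ^ #A :=
        eulerChar_eq_sum_sum_of_nonempty_iff fun A => leaders_nonempty_iff hr
    _ = ∑ S : Finset (ZMod n) with S.Nonempty,
          if S ∈ cyclicRips n r ∧ ∀ x ∈ S, x + r ∈ S then 1 else 0 := by
        refine sum_congr rfl fun S hS => ?_
        rw [sum_subset_leaders_neg_one_pow_card hr (mem_filter.1 hS).2, mul_ite, mul_zero,
          ← mul_pow, neg_mul_neg, one_mul, one_pow]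
    _ = _ := by
        rw [sum_boole, filter_filter]
        congr 2
        ext S
        simp only [mem_filter, mem_univ, true_and]
        tauto

lemma eulerChar_cyclicRips_nonneg (hr : 2 * r < n) : 0 ≤ eulerChar (cyclicRips n r) := by
  rw [eulerChar_cyclicRips hr]
  positivity

lemma eulerChar_cyclicRips_of_prime (hn : n.Prime) (hr₀ : 0 < r) (hr : r < n / 2) :
    eulerChar (cyclicRips n r) = 0 := by
  rw [eulerChar_cyclicRips (by lia), Nat.cast_eq_zero, card_eq_zero, filter_eq_empty_iff]
  rintro S hS ⟨hne, hclosed⟩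
  have hr_ne : (r : ZMod n) ≠ 0 := by
    rw [Ne, ZMod.natCast_eq_zero_iff]
    exact Nat.not_dvd_of_pos_of_lt hr₀ (by lia)
  have huniv : S = univ :=
    eq_univ_of_add_mem_of_prime_card (by rwa [Nat.card_zmod]) hr_ne hne hclosed
  have hfar := cyclicDiam_le_iff.1 (mem_cyclicRips.1 hS) (r + 1 : ℕ) (by simp [huniv]) 0
    (by simp [huniv])
  rw [sub_zero, ZMod.valMinAbs_natCast_of_le_half hr] at hfar
  lia

end CyclicComplex

section GeodesicCycle

open Finset

variable (p : ℝ) (n : ℕ) [hp : Fact (0 < p)] [NeZero n]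

/-- The homomorphism from `ℤ/n` to the circle of length `p` sending `1` to `p / n`; for `p = 2π` its
range is `C_n^geo`. -/
noncomputable def cyclePoint : ZMod n →+ AddCircle p :=
  (AddCircle.equivAddCircle 1 p one_ne_zero hp.out.ne').toAddMonoidHom.comp ZMod.toAddCircle

variable {p n}

lemma cyclePoint_apply (x : ZMod n) : cyclePoint p n x = ((x.val / n * p : ℝ) : AddCircle p) := by
  simp [cyclePoint, ZMod.toAddCircle_apply]

lemma cyclePoint_injective : Function.Injective (cyclePoint p n) :=
  (AddCircle.equivAddCircle 1 p one_ne_zero hp.out.ne').injective.comp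
    (ZMod.toAddCircle_injective n)

lemma norm_cyclePoint (x : ZMod n) : ‖cyclePoint p n x‖ = p / n * x.valMinAbs.natAbs := by
  rw [cyclePoint_apply, AddCircle.norm_div_natCast, Nat.mod_eq_of_lt x.val_lt,
    ZMod.valMinAbs_natAbs_eq_min]
  ring

lemma diam_image_cyclePoint (A : Finset (ZMod n)) :
    Metric.diam (cyclePoint p n '' A) = p / n * cyclicDiam A := by
  have hscale : 0 ≤ p / n := div_nonneg hp.out.le n.cast_nonneg
  have hdist (x y : ZMod n) :
      dist (cyclePoint p n x) (cyclePoint p n y) = p / n * (x - y).valMinAbs.natAbs := by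
    rw [dist_eq_norm, ← map_sub, norm_cyclePoint]
  refine le_antisymm (Metric.diam_le_of_forall_dist_le (by positivity) ?_) ?_
  · rintro _ ⟨x, hx, rfl⟩ _ ⟨y, hy, rfl⟩
    rw [hdist]
    gcongr
    exact cyclicDiam_le_iff.1 le_rfl x hx y hy
  · rcases A.eq_empty_or_nonempty with rfl | hne
    · simp [cyclicDiam]
    · obtain ⟨⟨x, y⟩, hxy, hmax⟩ := exists_mem_eq_sup (A ×ˢ A) (hne.product hne)
        fun q => (q.1 - q.2).valMinAbs.natAbs
      rw [mem_product] at hxy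
      rw [cyclicDiam, hmax, ← hdist]
      exact Metric.dist_le_diam_of_mem (A.finite_toSet.image _).isBounded
        (Set.mem_image_of_mem _ hxy.1) (Set.mem_image_of_mem _ hxy.2)

local instance fact_two_pi_pos : Fact (0 < 2 * π) := ⟨Real.two_pi_pos⟩

lemma geoCycle_eq_map :
    geoCycle n = univ.map ⟨cyclePoint (2 * π) n, cyclePoint_injective⟩ := by
  classical
  ext q
  -- In `geoCycle` the variable `k` is real: `range n` is coerced to `Finset ℝ` monadically.
  simp only [geoCycle, mem_image, mem_map, mem_univ, true_and, mem_range, bind_def, pure_def,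
    mem_sup, mem_singleton, Function.Embedding.coeFn_mk, cyclePoint_apply]
  constructor
  · rintro ⟨_, ⟨k, hk, rfl⟩, rfl⟩
    refine ⟨k, ?_⟩
    rw [ZMod.val_cast_of_lt hk]
    ring_nf
  · rintro ⟨x, rfl⟩
    refine ⟨x.val, ⟨x.val, x.val_lt, rfl⟩, ?_⟩
    ring_nf

lemma ripsMag_geoCycle_eq_sum_eulerChar (t : ℝ) :
    ripsMag (geoCycle n) t = Real.exp (-(2 * π / n * (n / 2 : ℕ)) * t) + ∑ r ∈ range (n / 2),
      eulerChar (cyclicRips n r) *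
        (Real.exp (-(2 * π / n * r) * t) - Real.exp (-(2 * π / n * (r + 1 : ℕ)) * t)) := by
  rw [geoCycle_eq_map]
  exact ripsMag_map_univ_eq_sum_eulerChar cyclePoint_injective diam_image_cyclePoint
    cyclicDiam_le_half t

/-- The part of `ripsMag (geoCycle n) t` coming from the full simplex and from scale `0`. -/
noncomputable def geoCycleMainTerm (t : ℝ) (n : ℕ) : ℝ :=
  Real.exp (-(2 * π / n * (n / 2 : ℕ)) * t) + n * (1 - Real.exp (-(2 * π * t / n)))

lemma ripsMag_geoCycle_eq_mainTerm_add_sum (hn : 2 ≤ n) (t : ℝ) :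
    ripsMag (geoCycle n) t = geoCycleMainTerm t n + ∑ r ∈ Ico 1 (n / 2),
      eulerChar (cyclicRips n r) *
        (Real.exp (-(2 * π / n * r) * t) - Real.exp (-(2 * π / n * (r + 1 : ℕ)) * t)) := by
  rw [ripsMag_geoCycle_eq_sum_eulerChar, range_eq_Ico, sum_eq_sum_Ico_succ_bot (by lia),
    eulerChar_cyclicRips_zero, geoCycleMainTerm]
  simp only [Nat.cast_zero, Nat.cast_one, Int.cast_natCast, zero_add, mul_zero, mul_one, neg_zero,
    zero_mul, Real.exp_zero]
  ring_nf

lemma geoCycleMainTerm_le_ripsMag {n : ℕ} (hn : 2 ≤ n) {t : ℝ} (ht : 0 ≤ t) :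
    geoCycleMainTerm t n ≤ ripsMag (geoCycle n) t := by
  have : NeZero n := ⟨by lia⟩
  rw [ripsMag_geoCycle_eq_mainTerm_add_sum hn]
  refine le_add_of_nonneg_right (sum_nonneg fun r hr => mul_nonneg ?_ ?_)
  · have hr_half := (mem_Ico.1 hr).2
    exact_mod_cast eulerChar_cyclicRips_nonneg (by lia)
  · rw [sub_nonneg]
    gcongr
    exact r.le_succ

lemma ripsMag_geoCycle_of_prime {n : ℕ} (hn : n.Prime) (t : ℝ) :
    ripsMag (geoCycle n) t = geoCycleMainTerm t n := by
  have : NeZero n := ⟨hn.ne_zero⟩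
  rw [ripsMag_geoCycle_eq_mainTerm_add_sum hn.two_le, sum_eq_zero, add_zero]
  intro r hr
  obtain ⟨hr₀, hr_half⟩ := mem_Ico.1 hr
  rw [eulerChar_cyclicRips_of_prime hn hr₀ hr_half, Int.cast_zero, zero_mul]

end GeodesicCycle

section Limits

open Filter Topology

lemma tendsto_natCast_mul_one_sub_exp_neg_div (x : ℝ) :
    Tendsto (fun n : ℕ => n * (1 - Real.exp (-(x / n)))) atTop (𝓝 x) := by
  have hderiv : HasDerivAt (fun h : ℝ => 1 - Real.exp (-(x * h))) x 0 := by
    simpa using ((hasDerivAt_id (0 : ℝ)).const_mul x).neg.exp.const_sub 1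
  have hslope := hderiv.tendsto_slope_zero_right.comp
    (tendsto_inv_atTop_nhdsGT_zero.comp tendsto_natCast_atTop_atTop)
  refine hslope.congr fun n => ?_
  simp [div_eq_mul_inv]

lemma tendsto_natCast_nat_div_div_atTop (k : ℕ) :
    Tendsto (fun n : ℕ => ((n / k : ℕ) : ℝ) / n) atTop (𝓝 (k : ℝ)⁻¹) := by
  have hfloor := (tendsto_nat_floor_mul_div_atTop (R := ℝ) (inv_nonneg.2 k.cast_nonneg)).comp
    tendsto_natCast_atTop_atTop
  refine hfloor.congr fun n => ?_
  rw [Function.comp_apply, inv_mul_eq_div, Nat.floor_div_natCast, Nat.floor_natCast]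

lemma tendsto_geoCycleMainTerm (t : ℝ) :
    Tendsto (geoCycleMainTerm t) atTop (𝓝 (Real.exp (-π * t) + 2 * π * t)) := by
  refine Tendsto.add ((Real.continuous_exp.tendsto _).comp ?_)
    (tendsto_natCast_mul_one_sub_exp_neg_div _)
  have hhalf := (tendsto_natCast_nat_div_div_atTop 2).const_mul (-(2 * π * t))
  rw [show -(2 * π * t) * ((2 : ℕ) : ℝ)⁻¹ = -π * t by push_cast; ring] at hhalf
  exact hhalf.congr fun n => by ring

lemma liminf_eq_of_tendsto_of_frequently_eq {ι α : Type*} [ConditionallyCompleteLinearOrder α]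
    [TopologicalSpace α] [OrderTopology α] {l : Filter ι} {u v : ι → α} {a : α}
    (hu : Tendsto u l (𝓝 a)) (hle : u ≤ᶠ[l] v) (heq : ∃ᶠ i in l, v i = u i) : liminf v l = a := by
  have hne : (l ⊓ 𝓟 {i | v i = u i}).NeBot := frequently_mem_iff_neBot.1 heq
  have : l.NeBot := hne.mono inf_le_left
  have hu' : Tendsto u (l ⊓ 𝓟 {i | v i = u i}) (𝓝 a) := hu.mono_left inf_le_left
  have hv' : Tendsto v (l ⊓ 𝓟 {i | v i = u i}) (𝓝 a) :=
    hu'.congr' (eventually_inf_principal.2 (.of_forall fun i hi => hi.symm))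
  have hbdd : l.IsBoundedUnder (· ≥ ·) v := hu.isBoundedUnder_ge.mono_ge hle
  refine le_antisymm ?_ ?_
  · rw [← hv'.liminf_eq]
    exact liminf_le_liminf_of_le inf_le_left hbdd hv'.isCoboundedUnder_ge
  · rw [← hu.liminf_eq]
    exact liminf_le_liminf hle hu.isBoundedUnder_ge
      (hv'.isCoboundedUnder_ge.mono (map_mono inf_le_left))

end Limits

/-- for every `t > 0`,
`liminf_{n→∞} |tC_n^geo|_Rips = e^{−πt} + 2πt`. -/
theorem ripsMag_geoCycle_liminf (t : ℝ) (ht : 0 < t) :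
    Filter.liminf (fun n : ℕ => ripsMag (geoCycle n) t) Filter.atTop =
      Real.exp (-π * t) + 2 * π * t := by
  refine liminf_eq_of_tendsto_of_frequently_eq (tendsto_geoCycleMainTerm t) ?_ ?_
  · filter_upwards [Filter.eventually_ge_atTop 2] with n hn
    exact geoCycleMainTerm_le_ripsMag hn ht.le
  · have hprimes : ∃ᶠ n : ℕ in Filter.atTop, n.Prime :=
      Nat.frequently_atTop_iff_infinite.2 Nat.infinite_setOfPred_prime
    exact hprimes.mono fun n hn => ripsMag_geoCycle_of_prime hn t
end
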